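/- Let W be any DMC with 0 < V_min and set β := √(V_min/V_max). Then for every ε ∈ (0,1): if ε ∈ (0, β/(1+β)], then liminf_{n→∞} (log M*_fb(n, ε) − nC)/√n ≥ √(V_min)·Φ^{-1}((1/(2β))·ε(1+β)); and if ε ∈ (β/(1+β), 1), then liminf_{n→∞} (log M*_fb(n, ε) − nC)/√n ≥ √(V_max)·Φ^{-1}((1/2)·[ε(1+β) + (1−β)]). -/

import Mathlib

open MeasureTheory Real Filter Set
open scoped BigOperators ENNReal Classical

noncomputable section

namespace Paper

variable {X Y : Type*} [Fintype X] [Fintype Y]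

/-- `P` is a probability mass function on the finite alphabet `X`. -/
def IsDist (P : X → ℝ) : Prop := (∀ x, 0 ≤ P x) ∧ ∑ x, P x = 1

/-- `W` is a discrete memoryless channel (a stochastic matrix). -/
def IsChannel (W : X → Y → ℝ) : Prop := ∀ x, IsDist (W x)

/-- `W` has no all-zero column. -/
def NoZeroColumn (W : X → Y → ℝ) : Prop := ∀ y, ∃ x, 0 < W x y

/-- Output distribution induced by input distribution `P` through `W`. -/
def outDist (P : X → ℝ) (W : X → Y → ℝ) (y : Y) : ℝ := ∑ x, P x * W x y

/-- Mutual information `I(P; W)` (in nats). -/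
def mutInfo (P : X → ℝ) (W : X → Y → ℝ) : ℝ :=
  ∑ x, ∑ y, P x * W x y * Real.log (W x y / outDist P W y)

/-- Shannon capacity `C`. -/
def capacity (W : X → Y → ℝ) : ℝ :=
  sSup {c | ∃ P, IsDist P ∧ mutInfo P W = c}

/-- The set of capacity-achieving input distributions `Π*`. -/
def capacityAchievers (W : X → Y → ℝ) : Set (X → ℝ) :=
  {P | IsDist P ∧ mutInfo P W = capacity W}

/-- The (unique) capacity-achieving output distribution `q*`. -/
def qStar (W : X → Y → ℝ) : Y → ℝ :=
  if h : (capacityAchievers W).Nonempty then outDist h.choose W else fun _ => 0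

/-- The information density `i*(x,y) = log (W(y|x)/q*(y))`. -/
def iStar (W : X → Y → ℝ) (x : X) (y : Y) : ℝ := Real.log (W x y / qStar W y)

/-- `ν_x = Var[i*(x,Y)]`, `Y ~ W(·|x)`. -/
def nu (W : X → Y → ℝ) (x : X) : ℝ :=
  ∑ y, W x y * (iStar W x y) ^ 2 - (∑ y, W x y * iStar W x y) ^ 2

/-- `V_min`. -/
def Vmin (W : X → Y → ℝ) : ℝ :=
  sInf {v | ∃ P ∈ capacityAchievers W, v = ∑ x, P x * nu W x}

/-- `V_max`. -/
def Vmax (W : X → Y → ℝ) : ℝ :=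
  sSup {v | ∃ P ∈ capacityAchievers W, v = ∑ x, P x * nu W x}

/-- `V_ε`. -/
def Veps (W : X → Y → ℝ) (ε : ℝ) : ℝ := if ε < 1/2 then Vmin W else Vmax W

/-- `ν_min = min_x ν_x`. -/
def numin (W : X → Y → ℝ) [Nonempty X] : ℝ := ⨅ x, nu W x

/-- `ν_max = max_x ν_x`. -/
def numax (W : X → Y → ℝ) [Nonempty X] : ℝ := ⨆ x, nu W x

/-- Average error probability of the feedback code `(enc, dec)` with `M` messages
and blocklength `n`. -/
def errProb (W : X → Y → ℝ) (n M : ℕ) (enc : Fin M → List Y → X)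
    (dec : (Fin n → Y) → Fin M) : ℝ :=
  (M : ℝ)⁻¹ * ∑ m : Fin M, ∑ y : Fin n → Y,
    (∏ k : Fin n, W (enc m ((List.ofFn y).take (k : ℕ))) (y k)) *
      (if dec y = m then 0 else 1)

/-- Minimum average error probability of `(n,R)` feedback codes. -/
def minErr (W : X → Y → ℝ) (n : ℕ) (R : ℝ) : ℝ :=
  sInf {e | ∃ enc dec, e = errProb W n ⌈Real.exp (n * R)⌉₊ enc dec}

/-- `M*_fb(n, ε)`. -/
def Mfb (W : X → Y → ℝ) (n : ℕ) (ε : ℝ) : ℝ :=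
  sSup {m | ∃ R : ℝ, m = (⌈Real.exp (n * R)⌉₊ : ℝ) ∧ minErr W n R ≤ ε}

/-- Standard Gaussian density `φ`. -/
def gpdf (u : ℝ) : ℝ := (Real.sqrt (2 * Real.pi))⁻¹ * Real.exp (-u ^ 2 / 2)

/-- Standard Gaussian CDF `Φ`. -/
def gcdf (t : ℝ) : ℝ := ∫ u in Set.Iic t, gpdf u

/-- Inverse Gaussian CDF `Φ⁻¹`. -/
def gcdfInv : ℝ → ℝ := Function.invFun gcdf

/-- The sequence `(log M*_fb(n,ε) - nC)/√n` whose liminf/limsup is the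
second-order coding rate with feedback. -/
def SOfb (W : X → Y → ℝ) (ε : ℝ) (n : ℕ) : ℝ :=
  (Real.log (Mfb W n ε) - n * capacity W) / Real.sqrt n

/-!
A feedback encoder can watch the centred information density `∑ (i*(x_k, y_k) - C)` accumulate and
switch between capacity-achieving input distributions: below the decoding threshold it uses one of
dispersion `V_max` to gain variance, above it one of dispersion `V_min` to stay there. In the
diffusion limit the accumulated density is an oscillating Brownian motion, with diffusion
coefficients `√V_min` on the positive and `√V_max` on the negative side, and the probability that it
is negative at time one is an explicit function of the starting point, whose inverse gives the two
bounds. This function solves the backward heat equation of the controlled walk, so that, run from a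
slightly earlier time, it satisfies the discrete Bellman inequality up to a negligible error.

All capacity-achieving inputs induce the same output law `q*`; hence Feinstein's greedy
construction, which only compares laws of output strings with the product law of `q*`, works for
such encoders too. A converse on the `√n` scale is needed as well, because the supremum defining
`M*_fb` and the `liminf` mean what they should only for sets and sequences bounded above.
-/

open InformationTheory
open scoped Topology

section RelativeEntropy

variable {p q : Y → ℝ}

/-- The relative entropy `D(p ‖ q)`, meaningful only when `p` vanishes wherever `q` does: the
conventions `p / 0 = 0` and `log 0 = 0` make every other term with `q y = 0` vanish. -/
def relEntropy (p q : Y → ℝ) : ℝ := ∑ y, p y * log (p y / q y)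

lemma relEntropy_eq_sum_klFun (hp : IsDist p) (hq : IsDist q) (hpq : ∀ y, q y = 0 → p y = 0) :
    relEntropy p q = ∑ y, q y * klFun (p y / q y) := by
  have hterm : ∀ y, q y * klFun (p y / q y) = p y * log (p y / q y) + (q y - p y) := fun y => by
    by_cases hy : q y = 0
    · simp [hy, hpq y hy]
    · rw [klFun_apply]
      field_simp
      ring
  rw [Finset.sum_congr rfl fun y _ => hterm y, Finset.sum_add_distrib, Finset.sum_sub_distrib,
    hp.2, hq.2, sub_self, add_zero, relEntropy]

lemma mul_klFun_div_nonneg (hp : IsDist p) (hq : IsDist q) (y : Y) :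
    0 ≤ q y * klFun (p y / q y) :=
  mul_nonneg (hq.1 y) (klFun_nonneg (div_nonneg (hp.1 y) (hq.1 y)))

lemma mul_klFun_div_le_relEntropy (hp : IsDist p) (hq : IsDist q)
    (hpq : ∀ y, q y = 0 → p y = 0) (y : Y) : q y * klFun (p y / q y) ≤ relEntropy p q := by
  rw [relEntropy_eq_sum_klFun hp hq hpq]
  exact Finset.single_le_sum (f := fun y => q y * klFun (p y / q y))
    (fun y _ => mul_klFun_div_nonneg hp hq y) (Finset.mem_univ y)

lemma relEntropy_nonneg (hp : IsDist p) (hq : IsDist q) (hpq : ∀ y, q y = 0 → p y = 0) :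
    0 ≤ relEntropy p q := by
  rw [relEntropy_eq_sum_klFun hp hq hpq]
  exact Finset.sum_nonneg fun y _ => mul_klFun_div_nonneg hp hq y

lemma eq_of_relEntropy_nonpos (hp : IsDist p) (hq : IsDist q) (hpq : ∀ y, q y = 0 → p y = 0)
    (h : relEntropy p q ≤ 0) : p = q := by
  funext y
  by_cases hy : q y = 0
  · rw [hy, hpq y hy]
  have hle := (mul_klFun_div_le_relEntropy hp hq hpq y).trans h
  have hzero : klFun (p y / q y) = 0 :=
    (mul_eq_zero.1 (hle.antisymm (mul_klFun_div_nonneg hp hq y))).resolve_left hy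
  rwa [klFun_eq_zero_iff (div_nonneg (hp.1 y) (hq.1 y)), div_eq_one_iff_eq hy] at hzero

end RelativeEntropy

section Capacity

variable {P Q : X → ℝ} {W : X → Y → ℝ}

lemma IsDist.mix (hP : IsDist P) (hQ : IsDist Q) {t : ℝ} (ht : t ∈ Icc (0 : ℝ) 1) :
    IsDist ((1 - t) • P + t • Q) :=
  convex_stdSimplex ℝ X hP hQ (sub_nonneg.2 ht.2) ht.1 (sub_add_cancel 1 t)

lemma isDist_outDist (hW : IsChannel W) (hP : IsDist P) : IsDist (outDist P W) := by
  refine ⟨fun y => Finset.sum_nonneg fun x _ => mul_nonneg (hP.1 x) ((hW x).1 y), ?_⟩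
  unfold outDist
  rw [Finset.sum_comm]
  simp_rw [← Finset.mul_sum, (hW _).2, mul_one]
  exact hP.2

omit [Fintype Y] in
lemma outDist_add_smul (a b : ℝ) :
    outDist (a • P + b • Q) W = a • outDist P W + b • outDist Q W := by
  ext y
  simp [outDist, add_mul, mul_assoc, Finset.sum_add_distrib, Finset.mul_sum]

lemma mul_le_outDist (hW : IsChannel W) (hP : IsDist P) (x : X) (y : Y) :
    P x * W x y ≤ outDist P W y :=
  Finset.single_le_sum (f := fun x => P x * W x y)
    (fun x _ => mul_nonneg (hP.1 x) ((hW x).1 y)) (Finset.mem_univ x)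

lemma mutInfo_eq_sum_relEntropy :
    mutInfo P W = ∑ x, P x * relEntropy (W x) (outDist P W) := by
  simp only [mutInfo, relEntropy, Finset.mul_sum, mul_assoc]

lemma sum_mul_relEntropy (hW : IsChannel W) (hP : IsDist P) {r : Y → ℝ}
    (hr : ∀ y, r y = 0 → outDist P W y = 0) :
    ∑ x, P x * relEntropy (W x) r = mutInfo P W + relEntropy (outDist P W) r := by
  have hout : relEntropy (outDist P W) r
      = ∑ x, ∑ y, P x * W x y * log (outDist P W y / r y) := by
    rw [Finset.sum_comm]
    exact Finset.sum_congr rfl fun y _ => Finset.sum_mul ..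
  rw [hout, mutInfo, ← Finset.sum_add_distrib]
  refine Finset.sum_congr rfl fun x _ => ?_
  rw [relEntropy, Finset.mul_sum, ← Finset.sum_add_distrib]
  refine Finset.sum_congr rfl fun y _ => ?_
  rcases (mul_nonneg (hP.1 x) ((hW x).1 y)).eq_or_lt with h0 | h0
  · simp [← mul_assoc, ← h0]
  have hq : outDist P W y ≠ 0 := (h0.trans_le (mul_le_outDist hW hP x y)).ne'
  have hry : r y ≠ 0 := fun h => hq (hr y h)
  rw [log_div (right_ne_zero_of_mul h0.ne') hry, log_div (right_ne_zero_of_mul h0.ne') hq,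
    log_div hq hry]
  ring

lemma mutInfo_le_entropy (hW : IsChannel W) (hP : IsDist P) :
    mutInfo P W ≤ ∑ x, negMulLog (P x) := by
  refine Finset.sum_le_sum fun x _ => ?_
  have hterm : ∀ y, P x * W x y * log (W x y / outDist P W y) ≤ W x y * negMulLog (P x) := by
    intro y
    rcases (mul_nonneg (hP.1 x) ((hW x).1 y)).eq_or_lt with h0 | h0
    · rcases mul_eq_zero.1 h0.symm with h | h <;> simp [h]
    have hq := mul_le_outDist hW hP x y
    have hp : 0 < P x := (hP.1 x).lt_of_ne' (left_ne_zero_of_mul h0.ne')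
    have hw : 0 < W x y := ((hW x).1 y).lt_of_ne' (right_ne_zero_of_mul h0.ne')
    have hlog : log (W x y / outDist P W y) ≤ -log (P x) := by
      rw [← log_inv]
      refine log_le_log (div_pos hw (h0.trans_le hq)) ?_
      rw [div_le_iff₀ (h0.trans_le hq)]
      field_simp
      linarith
    calc P x * W x y * log (W x y / outDist P W y) ≤ P x * W x y * -log (P x) :=
          mul_le_mul_of_nonneg_left hlog h0.le
      _ = W x y * negMulLog (P x) := by rw [negMulLog]; ring
  calc ∑ y, P x * W x y * log (W x y / outDist P W y) ≤ ∑ y, W x y * negMulLog (P x) :=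
        Finset.sum_le_sum fun y _ => hterm y
    _ = negMulLog (P x) := by rw [← Finset.sum_mul, (hW x).2, one_mul]

lemma mutInfo_le_capacity (hW : IsChannel W) (hP : IsDist P) : mutInfo P W ≤ capacity W := by
  refine le_csSup ⟨∑ _x : X, (1 : ℝ), ?_⟩ ⟨P, hP, rfl⟩
  rintro _ ⟨P, hP, rfl⟩
  refine (mutInfo_le_entropy hW hP).trans (Finset.sum_le_sum fun x _ => ?_)
  linarith [negMulLog_le_one_sub_self (hP.1 x), hP.1 x]

lemma sum_mul_relEntropy_mix_le (hW : IsChannel W) (hP : P ∈ capacityAchievers W) (hQ : IsDist Q)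
    {t : ℝ} (ht : t ∈ Ioo (0 : ℝ) 1) :
    ∑ x, Q x * relEntropy (W x) (outDist ((1 - t) • P + t • Q) W) ≤ capacity W := by
  set R := (1 - t) • P + t • Q with hR
  have hRdist : IsDist R := hP.1.mix hQ (Ioo_subset_Icc_self ht)
  have hac : ∀ y, outDist R W y = 0 → outDist P W y = 0 := fun y hy => by
    have hP0 := (isDist_outDist hW hP.1).1 y
    have hQ0 := mul_nonneg ht.1.le ((isDist_outDist hW hQ).1 y)
    rw [hR, outDist_add_smul] at hy
    simp only [Pi.add_apply, Pi.smul_apply, smul_eq_mul] at hy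
    nlinarith [ht.2]
  have hsplit : mutInfo R W = (1 - t) * ∑ x, P x * relEntropy (W x) (outDist R W)
      + t * ∑ x, Q x * relEntropy (W x) (outDist R W) := by
    rw [mutInfo_eq_sum_relEntropy, Finset.mul_sum, Finset.mul_sum, ← Finset.sum_add_distrib]
    exact Finset.sum_congr rfl fun x _ => by
      simp only [hR, Pi.add_apply, Pi.smul_apply, smul_eq_mul]; ring
  have hle := mutInfo_le_capacity hW hRdist
  rw [hsplit, sum_mul_relEntropy hW hP.1 hac, hP.2] at hle
  have hnonneg := relEntropy_nonneg (isDist_outDist hW hP.1) (isDist_outDist hW hRdist) hac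
  refine le_of_mul_le_mul_left ?_ ht.1
  linarith [mul_nonneg (sub_pos.2 ht.2).le hnonneg]

lemma outDist_eq_of_mem_capacityAchievers (hW : IsChannel W) (hP : P ∈ capacityAchievers W)
    (hQ : Q ∈ capacityAchievers W) : outDist P W = outDist Q W := by
  have ht : (1 / 2 : ℝ) ∈ Ioo (0 : ℝ) 1 := by norm_num
  have hle := sum_mul_relEntropy_mix_le hW hP hQ.1 ht
  have hRdist := isDist_outDist hW (hP.1.mix hQ.1 (Ioo_subset_Icc_self ht))
  have hR : ∀ y, outDist ((1 - 1 / 2 : ℝ) • P + (1 / 2 : ℝ) • Q) W y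
      = (outDist P W y + outDist Q W y) / 2 := fun y => by
    simp only [outDist_add_smul, Pi.add_apply, Pi.smul_apply, smul_eq_mul]
    ring
  have hac : ∀ y, outDist ((1 - 1 / 2 : ℝ) • P + (1 / 2 : ℝ) • Q) W y = 0 → outDist Q W y = 0 :=
    fun y hy => by
      rw [hR] at hy
      linarith [(isDist_outDist hW hP.1).1 y, (isDist_outDist hW hQ.1).1 y]
  rw [sum_mul_relEntropy hW hQ.1 hac, hQ.2] at hle
  have heq := eq_of_relEntropy_nonpos (isDist_outDist hW hQ.1) hRdist hac (by linarith)
  funext y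
  linarith [congrFun heq y, hR y]

lemma outDist_eq_qStar (hW : IsChannel W) (hP : P ∈ capacityAchievers W) :
    outDist P W = qStar W := by
  have hne : (capacityAchievers W).Nonempty := ⟨P, hP⟩
  rw [qStar, dif_pos hne]
  exact outDist_eq_of_mem_capacityAchievers hW hP hne.choose_spec

lemma isDist_qStar (hW : IsChannel W) (hP : P ∈ capacityAchievers W) : IsDist (qStar W) :=
  outDist_eq_qStar hW hP ▸ isDist_outDist hW hP.1

lemma relEntropy_mix_qStar_le (hW : IsChannel W) (hP : P ∈ capacityAchievers W) (x : X) {t : ℝ}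
    (ht : t ∈ Ioo (0 : ℝ) 1) :
    relEntropy (W x) ((1 - t) • qStar W + t • W x) ≤ capacity W := by
  have hout : outDist (Pi.single x 1) W = W x := by
    ext y
    simp [outDist, Pi.single_apply]
  have hle := sum_mul_relEntropy_mix_le hW hP (single_mem_stdSimplex ℝ x) ht
  rw [outDist_add_smul, hout, outDist_eq_qStar hW hP] at hle
  simpa [Pi.single_apply] using hle

lemma qStar_pos (hW : IsChannel W) (hcol : NoZeroColumn W) (hP : P ∈ capacityAchievers W)
    (y : Y) : 0 < qStar W y := by
  have hq := isDist_qStar hW hP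
  refine (hq.1 y).lt_of_ne' fun hy => ?_
  obtain ⟨x, hx⟩ := hcol y
  have hbound : ∀ t ∈ Ioo (0 : ℝ) 1, -(capacity W / W x y) - 1 ≤ log t := by
    intro t ht
    have hr := hq.mix (hW x) (Ioo_subset_Icc_self ht)
    have hac : ∀ y', ((1 - t) • qStar W + t • W x) y' = 0 → W x y' = 0 := fun y' hy' => by
      simp only [Pi.add_apply, Pi.smul_apply, smul_eq_mul] at hy'
      nlinarith [mul_nonneg (sub_pos.2 ht.2).le (hq.1 y'), (hW x).1 y', ht.1]
    have hle := (mul_klFun_div_le_relEntropy (hW x) hr hac y).trans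
      (relEntropy_mix_qStar_le hW hP x ht)
    simp only [Pi.add_apply, Pi.smul_apply, smul_eq_mul, hy, mul_zero, zero_add] at hle
    rw [div_mul_cancel_right₀ hx.ne', klFun_apply, log_inv] at hle
    have hmul : t * W x y * (t⁻¹ * -log t + 1 - t⁻¹) = W x y * (-log t + t - 1) := by
      have := ht.1.ne'
      field_simp
    rw [hmul, ← le_div_iff₀' hx] at hle
    linarith [ht.1]
  obtain ⟨t, hlog, ht⟩ := (((tendsto_log_nhdsGT_zero.eventually
    (eventually_lt_atBot (-(capacity W / W x y) - 1))).and
    (Ioo_mem_nhdsGT (zero_lt_one' ℝ))).exists)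
  exact (hbound t ht).not_gt hlog

/-- The Kuhn–Tucker inequality `D(W(·|x) ‖ q*) ≤ C`. -/
lemma relEntropy_qStar_le_capacity (hW : IsChannel W) (hcol : NoZeroColumn W)
    (hP : P ∈ capacityAchievers W) (x : X) : relEntropy (W x) (qStar W) ≤ capacity W := by
  have hlim : Tendsto (fun t : ℝ => relEntropy (W x) ((1 - t) • qStar W + t • W x))
      (nhdsWithin 0 (Ioi 0)) (nhds (relEntropy (W x) (qStar W))) := by
    refine Tendsto.mono_left (tendsto_finsetSum _ fun y _ => ?_) nhdsWithin_le_nhds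
    rcases eq_or_ne (W x y) 0 with h0 | h0
    · simp [h0]
    have hq := (qStar_pos hW hcol hP y).ne'
    have hcont : ContinuousAt
        (fun t : ℝ => W x y * log (W x y / ((1 - t) * qStar W y + t * W x y))) 0 := by
      refine continuousAt_const.mul ((continuousAt_const.div (by fun_prop) ?_).log ?_)
      · simpa using hq
      · simpa using ⟨h0, hq⟩
    simpa using hcont.tendsto
  refine le_of_tendsto hlim ?_
  filter_upwards [Ioo_mem_nhdsGT (zero_lt_one' ℝ)] with t ht
  exact relEntropy_mix_qStar_le hW hP x ht

lemma sum_mul_relEntropy_qStar (hW : IsChannel W) (hP : P ∈ capacityAchievers W) :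
    ∑ x, P x * relEntropy (W x) (qStar W) = capacity W := by
  rw [← hP.2, mutInfo_eq_sum_relEntropy, outDist_eq_qStar hW hP]

lemma relEntropy_qStar_eq_capacity (hW : IsChannel W) (hcol : NoZeroColumn W)
    (hP : P ∈ capacityAchievers W) {x : X} (hx : P x ≠ 0) :
    relEntropy (W x) (qStar W) = capacity W := by
  have hgap : ∑ x, P x * (capacity W - relEntropy (W x) (qStar W)) = 0 := by
    simp only [mul_sub, Finset.sum_sub_distrib, ← Finset.sum_mul, hP.1.2,
      sum_mul_relEntropy_qStar hW hP, one_mul, sub_self]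
  have hterm := (Finset.sum_eq_zero_iff_of_nonneg fun x _ => mul_nonneg (hP.1.1 x)
    (sub_nonneg.2 (relEntropy_qStar_le_capacity hW hcol hP x))).1 hgap x (Finset.mem_univ x)
  linarith [(mul_eq_zero.1 hterm).resolve_left hx]

lemma capacityAchievers_eq (hW : IsChannel W) :
    capacityAchievers W = stdSimplex ℝ X ∩ ({P | outDist P W = qStar W} ∩
      {P | ∑ x, P x * relEntropy (W x) (qStar W) = capacity W}) := by
  ext P
  refine ⟨fun hP => ⟨hP.1, outDist_eq_qStar hW hP, sum_mul_relEntropy_qStar hW hP⟩, ?_⟩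
  rintro ⟨hdist, hout, hsum⟩
  refine ⟨hdist, ?_⟩
  rw [mem_ofPred_eq] at hout hsum
  rw [mutInfo_eq_sum_relEntropy, hout, hsum]

lemma isCompact_capacityAchievers (hW : IsChannel W) : IsCompact (capacityAchievers W) := by
  rw [capacityAchievers_eq hW]
  refine (isCompact_stdSimplex ℝ X).inter_right (IsClosed.inter ?_ ?_)
  · refine isClosed_eq (continuous_pi fun y => ?_) continuous_const
    unfold outDist
    fun_prop
  · exact isClosed_eq (by fun_prop) continuous_const

lemma setOf_dispersion_eq_image (W : X → Y → ℝ) :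
    {v | ∃ P ∈ capacityAchievers W, v = ∑ x, P x * nu W x}
      = (fun P => ∑ x, P x * nu W x) '' capacityAchievers W := by
  ext v
  simp [eq_comm]

lemma isCompact_image_dispersion (hW : IsChannel W) :
    IsCompact ((fun P => ∑ x, P x * nu W x) '' capacityAchievers W) :=
  (isCompact_capacityAchievers hW).image (by fun_prop)

lemma exists_sum_mul_nu_eq_Vmin (hW : IsChannel W) (hne : (capacityAchievers W).Nonempty) :
    ∃ P ∈ capacityAchievers W, ∑ x, P x * nu W x = Vmin W := by
  rw [Vmin, setOf_dispersion_eq_image]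
  exact (isCompact_image_dispersion hW).sInf_mem (hne.image _)

lemma exists_sum_mul_nu_eq_Vmax (hW : IsChannel W) (hne : (capacityAchievers W).Nonempty) :
    ∃ P ∈ capacityAchievers W, ∑ x, P x * nu W x = Vmax W := by
  rw [Vmax, setOf_dispersion_eq_image]
  exact (isCompact_image_dispersion hW).sSup_mem (hne.image _)

lemma Vmin_le_Vmax (hW : IsChannel W) (hne : (capacityAchievers W).Nonempty) :
    Vmin W ≤ Vmax W := by
  rw [Vmin, Vmax, setOf_dispersion_eq_image]
  exact csInf_le_csSup (hne.image _) (isCompact_image_dispersion hW).bddBelow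
    (isCompact_image_dispersion hW).bddAbove

lemma capacityAchievers_nonempty_of_Vmin_ne_zero (h : Vmin W ≠ 0) :
    (capacityAchievers W).Nonempty := by
  contrapose! h
  simp [Vmin, h]

/-- The centred information density `i*(x, y) - C`. -/
def centDens (W : X → Y → ℝ) (x : X) (y : Y) : ℝ := iStar W x y - capacity W

lemma sum_mul_centDens (hW : IsChannel W) (x : X) :
    ∑ y, W x y * centDens W x y = relEntropy (W x) (qStar W) - capacity W := by
  simp only [centDens, mul_sub, Finset.sum_sub_distrib, ← Finset.sum_mul, (hW x).2, one_mul,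
    relEntropy, iStar]

lemma sum_mul_centDens_nonpos (hW : IsChannel W) (hcol : NoZeroColumn W)
    (hP : P ∈ capacityAchievers W) (x : X) : ∑ y, W x y * centDens W x y ≤ 0 := by
  rw [sum_mul_centDens hW]
  exact sub_nonpos.2 (relEntropy_qStar_le_capacity hW hcol hP x)

lemma sum_sum_mul_centDens (hW : IsChannel W) (hP : P ∈ capacityAchievers W) :
    ∑ x, P x * ∑ y, W x y * centDens W x y = 0 := by
  simp only [sum_mul_centDens hW, mul_sub, Finset.sum_sub_distrib, ← Finset.sum_mul, hP.1.2,
    sum_mul_relEntropy_qStar hW hP, one_mul, sub_self]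

lemma sum_sum_mul_centDens_sq (hW : IsChannel W) (hcol : NoZeroColumn W)
    (hP : P ∈ capacityAchievers W) :
    ∑ x, P x * ∑ y, W x y * centDens W x y ^ 2 = ∑ x, P x * nu W x := by
  refine Finset.sum_congr rfl fun x _ => ?_
  by_cases hx : P x = 0
  · simp [hx]
  have hmean : ∑ y, W x y * iStar W x y = capacity W := relEntropy_qStar_eq_capacity hW hcol hP hx
  have hexpand : ∑ y, W x y * centDens W x y ^ 2 = ∑ y, W x y * iStar W x y ^ 2
      - 2 * capacity W * ∑ y, W x y * iStar W x y + capacity W ^ 2 * ∑ y, W x y := by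
    rw [Finset.mul_sum, Finset.mul_sum, ← Finset.sum_sub_distrib, ← Finset.sum_add_distrib]
    exact Finset.sum_congr rfl fun y _ => by rw [centDens]; ring
  rw [hexpand, nu, hmean, (hW x).2]
  ring

end Capacity

section FeedbackLaw

variable {n : ℕ} {W : X → Y → ℝ}

/-- The law of the output string when the feedback encoder `f` is used over the channel `W`. -/
def pathLaw (W : X → Y → ℝ) {n : ℕ} (f : List Y → X) (y : Fin n → Y) : ℝ :=
  ∏ k : Fin n, W (f ((List.ofFn y).take (k : ℕ))) (y k)

/-- The score `∑ j(x_k, y_k)` accumulated along an output string when the feedback encoder `f`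
is used. -/
def pathSum (j : X → Y → ℝ) {n : ℕ} (f : List Y → X) (y : Fin n → Y) : ℝ :=
  ∑ k : Fin n, j (f ((List.ofFn y).take (k : ℕ))) (y k)

omit [Fintype X] [Fintype Y] in
lemma pathLaw_cons (W : X → Y → ℝ) (f : List Y → X) (a : Y) (y : Fin n → Y) :
    pathLaw W f (Fin.cons a y : Fin (n + 1) → Y)
      = W (f []) a * pathLaw W (fun l => f (a :: l)) y := by
  simp [pathLaw, Fin.prod_univ_succ, List.ofFn_succ]

omit [Fintype X] [Fintype Y] in
lemma pathSum_cons (j : X → Y → ℝ) (f : List Y → X) (a : Y) (y : Fin n → Y) :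
    pathSum j f (Fin.cons a y : Fin (n + 1) → Y)
      = j (f []) a + pathSum j (fun l => f (a :: l)) y := by
  simp [pathSum, Fin.sum_univ_succ, List.ofFn_succ]

lemma sum_fin_succ_fun (g : (Fin (n + 1) → Y) → ℝ) :
    ∑ y, g y = ∑ a, ∑ y : Fin n → Y, g (Fin.cons a y) := by
  rw [← (Fin.consEquiv (fun _ => Y)).sum_comp, Fintype.sum_prod_type]
  rfl

omit [Fintype X] in
lemma isDist_pathLaw (hW : IsChannel W) (f : List Y → X) :
    IsDist fun y : Fin n → Y => pathLaw W f y := by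
  refine ⟨fun y => Finset.prod_nonneg fun _ _ => (hW _).1 _, ?_⟩
  induction n generalizing f with
  | zero => simp [pathLaw]
  | succ n ih =>
    rw [sum_fin_succ_fun]
    simp_rw [pathLaw_cons, ← Finset.mul_sum, ih, mul_one]
    exact (hW _).2

omit [Fintype X] in
lemma sum_pathLaw_mul_le (hW : IsChannel W) {j : X → Y → ℝ} {U : ℕ → ℝ → ℝ}
    (hU : ∀ k s x, ∑ y, W x y * U k (s + j x y) ≤ U (k + 1) s) (f : List Y → X) (s : ℝ) :
    ∑ y : Fin n → Y, pathLaw W f y * U 0 (s + pathSum j f y) ≤ U n s := by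
  induction n generalizing f s with
  | zero => simp [pathLaw, pathSum]
  | succ n ih =>
    rw [sum_fin_succ_fun]
    simp_rw [pathLaw_cons, pathSum_cons, mul_assoc, ← Finset.mul_sum, ← add_assoc]
    exact (Finset.sum_le_sum fun a _ =>
      mul_le_mul_of_nonneg_left (ih _ _) ((hW _).1 a)).trans (hU n s (f []))

lemma IsDist.exists_le_sum_mul {P : X → ℝ} (hP : IsDist P) (v : X → ℝ) :
    ∃ x, v x ≤ ∑ x, P x * v x := by
  have : Nonempty X := by
    by_contra hX
    rw [not_nonempty_iff] at hX
    simpa using hP.2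
  obtain ⟨x, -, hx⟩ := Finset.univ.exists_min_image v Finset.univ_nonempty
  refine ⟨x, ?_⟩
  calc v x = ∑ x', P x' * v x := by rw [← Finset.sum_mul, hP.2, one_mul]
    _ ≤ ∑ x', P x' * v x' :=
      Finset.sum_le_sum fun x' hx' => mul_le_mul_of_nonneg_left (hx x' hx') (hP.1 x')

lemma sum_prod_mul_fin_succ {P : X → ℝ} {q : Y → ℝ} (hq : outDist P W = q)
    (d : (Fin (n + 1) → Y) → ℝ) :
    ∑ y, (∏ k, q (y k)) * d y
      = ∑ x, P x * ∑ a, W x a * ∑ y : Fin n → Y, (∏ k, q (y k)) * d (Fin.cons a y) := by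
  simp_rw [Finset.mul_sum (s := (Finset.univ : Finset Y))]
  rw [sum_fin_succ_fun, eq_comm, Finset.sum_comm]
  refine Finset.sum_congr rfl fun a _ => ?_
  simp_rw [← mul_assoc]
  rw [← Finset.sum_mul, Finset.mul_sum]
  refine Finset.sum_congr rfl fun y _ => ?_
  rw [Fin.prod_univ_succ, Fin.cons_zero, ← mul_assoc, ← outDist, hq]
  simp only [Fin.cons_succ]

/-- The discrete Bellman inequality for a controller that steers the score by choosing, at each
time, an input distribution whose output distribution is `q`; `U k s` bounds the cost incurred
from score `s` with `k` steps to go. -/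
def IsSupersolution (W : X → Y → ℝ) (q : Y → ℝ) (j : X → Y → ℝ) (U : ℕ → ℝ → ℝ) : Prop :=
  ∀ k s, ∃ P, IsDist P ∧ outDist P W = q ∧ ∑ x, P x * ∑ y, W x y * U k (s + j x y) ≤ U (k + 1) s

-- Since every admissible input distribution induces the same output law `q`, the extra cost `d`
-- is charged under the product law of `q`, whatever the encoder does; so the random inputs can be
-- derandomised step by step.
lemma IsSupersolution.exists_encoder (hW : IsChannel W) {q : Y → ℝ} {j : X → Y → ℝ}
    {U : ℕ → ℝ → ℝ} (hU : IsSupersolution W q j U) (s : ℝ) (d : (Fin n → Y) → ℝ) :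
    ∃ f : List Y → X, ∑ y : Fin n → Y, pathLaw W f y * (U 0 (s + pathSum j f y) + d y)
      ≤ U n s + ∑ y : Fin n → Y, (∏ k, q (y k)) * d y := by
  induction n generalizing s with
  | zero =>
    obtain ⟨P, hP, -⟩ := hU 0 0
    obtain ⟨x, -⟩ := hP.exists_le_sum_mul 0
    exact ⟨fun _ => x, by simp [pathLaw, pathSum]⟩
  | succ n ih =>
    obtain ⟨P, hP, hPq, hPU⟩ := hU n s
    choose f hf using fun x a => ih (s + j x a) fun y => d (Fin.cons a y)
    obtain ⟨x, hx⟩ := hP.exists_le_sum_mul fun x => ∑ a, W x a * (U n (s + j x a)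
      + ∑ y : Fin n → Y, (∏ k, q (y k)) * d (Fin.cons a y))
    refine ⟨fun l => match l with
      | [] => x
      | a :: l => f x a l, ?_⟩
    refine le_trans ?_ (hx.trans ?_)
    · rw [sum_fin_succ_fun]
      refine Finset.sum_le_sum fun a _ => ?_
      simp_rw [pathLaw_cons, pathSum_cons, mul_assoc, ← Finset.mul_sum, ← add_assoc]
      exact mul_le_mul_of_nonneg_left (hf x a) ((hW x).1 a)
    · rw [sum_prod_mul_fin_succ hPq]
      simp only [mul_add, Finset.sum_add_distrib]
      gcongr

omit [Fintype X] in
-- Given the past, `(s₊)²` grows by at most `b²` in mean, so this is Chebyshev's inequality.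
lemma sum_pathLaw_lt_pathSum_le (hW : IsChannel W) {j : X → Y → ℝ} {b L : ℝ}
    (hmean : ∀ x, ∑ y, W x y * j x y ≤ 0) (hb : ∀ x y, |j x y| ≤ b) (hL : 0 < L)
    (f : List Y → X) :
    ∑ y : Fin n → Y with L < pathSum j f y, pathLaw W f y ≤ n * b ^ 2 / L ^ 2 := by
  have hstep : ∀ (k : ℕ) s x, ∑ y, W x y * (max (s + j x y) 0 ^ 2 + k * b ^ 2)
      ≤ max s 0 ^ 2 + (k + 1 : ℕ) * b ^ 2 := by
    intro k s x
    have hterm : ∀ y, max (s + j x y) 0 ^ 2 + k * b ^ 2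
        ≤ 2 * max s 0 * j x y + (max s 0 ^ 2 + (k + 1) * b ^ 2) := by
      intro y
      have hj : j x y ^ 2 ≤ b ^ 2 := sq_le_sq' (abs_le.1 (hb x y)).1 (abs_le.1 (hb x y)).2
      have hmax : max (s + j x y) 0 ^ 2 ≤ (max s 0 + j x y) ^ 2 := by
        rcases le_total (s + j x y) 0 with h | h
        · simpa [max_eq_right h] using sq_nonneg _
        · rw [max_eq_left h]
          gcongr
          exact le_max_left s 0
      linarith
    calc _ ≤ ∑ y, W x y * (2 * max s 0 * j x y + (max s 0 ^ 2 + (k + 1) * b ^ 2)) :=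
          Finset.sum_le_sum fun y _ => mul_le_mul_of_nonneg_left (hterm y) ((hW x).1 y)
      _ = 2 * max s 0 * ∑ y, W x y * j x y + (max s 0 ^ 2 + (k + 1) * b ^ 2) := by
          simp only [mul_add, Finset.sum_add_distrib, ← Finset.sum_mul, (hW x).2, Finset.mul_sum,
            one_mul, mul_left_comm]
      _ ≤ _ := by
          push_cast
          linarith [mul_nonpos_of_nonneg_of_nonpos
            (show 0 ≤ 2 * max s 0 by positivity) (hmean x)]
  have hsecond := sum_pathLaw_mul_le (n := n) (U := fun k s => max s 0 ^ 2 + k * b ^ 2) hW hstep f 0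
  simp only [zero_add, Nat.cast_zero, zero_mul, add_zero, max_self, ne_eq, OfNat.ofNat_ne_zero,
    not_false_eq_true, zero_pow] at hsecond
  rw [le_div_iff₀ (pow_pos hL 2), Finset.sum_mul, Finset.sum_filter]
  refine (Finset.sum_le_sum fun y _ => ?_).trans hsecond
  have hnonneg := (isDist_pathLaw hW f).1 y
  split_ifs with hy
  · gcongr
    exact hy.le.trans (le_max_left _ _)
  · positivity

end FeedbackLaw

section AbstractCoding

variable {Ω : Type*} [Fintype Ω]

lemma exists_disjoint_decoding_set {p q : Ω → ℝ} (hp : IsDist p) {t ε η : ℝ} (ht : 0 < t)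
    {E : Finset Ω}
    (h : ∑ ω with p ω ≤ t * q ω, p ω + ∑ ω ∈ E, p ω ≤ η + ∑ ω ∈ E, q ω)
    (hE : ∑ ω ∈ E, q ω ≤ ε - η) :
    ∃ D : Finset Ω, Disjoint E D ∧ 1 - ε ≤ ∑ ω ∈ D, p ω ∧ ∑ ω ∈ D, q ω ≤ t⁻¹ := by
  refine ⟨({ω | t * q ω < p ω} : Finset Ω) \ E, Finset.disjoint_sdiff, ?_, ?_⟩
  · have hsplit := Finset.sum_filter_add_sum_filter_not Finset.univ (fun ω => p ω ≤ t * q ω) p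
    have hdiff := Finset.sum_inter_add_sum_sdiff {ω | t * q ω < p ω} E p
    have hinter := Finset.sum_le_sum_of_subset_of_nonneg
      (Finset.inter_subset_right (s₁ := ({ω | t * q ω < p ω} : Finset Ω)) (s₂ := E))
      fun ω _ _ => hp.1 ω
    simp only [not_le, hp.2] at hsplit
    linarith
  · rw [← one_div, le_div_iff₀' ht, Finset.mul_sum, ← hp.2]
    refine (Finset.sum_le_sum fun ω hω => ?_).trans
      (Finset.sum_le_univ_sum_of_nonneg hp.1)
    exact (Finset.mem_filter.1 (Finset.mem_sdiff.1 hω).1).2.le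

/-- Feinstein's greedy construction: decoding sets can be added one at a time as long as the
previously used sets have small `q`-mass. -/
theorem exists_pairwise_disjoint_decoding_sets {ι : Type*} {p : ι → Ω → ℝ} {q : Ω → ℝ}
    (hp : ∀ i, IsDist (p i)) {t ε η : ℝ} (ht : 0 < t)
    (h : ∀ E : Finset Ω, ∃ i,
      ∑ ω with p i ω ≤ t * q ω, p i ω + ∑ ω ∈ E, p i ω ≤ η + ∑ ω ∈ E, q ω)
    {M : ℕ} (hM : M ≤ t * (ε - η)) :
    ∃ (c : Fin M → ι) (D : Fin M → Finset Ω), Pairwise (Function.onFun Disjoint D) ∧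
      (∀ m, 1 - ε ≤ ∑ ω ∈ D m, p (c m) ω) ∧ ∀ m, ∑ ω ∈ D m, q ω ≤ t⁻¹ := by
  induction M with
  | zero => exact ⟨Fin.elim0, Fin.elim0, fun m => m.elim0, fun m => m.elim0, fun m => m.elim0⟩
  | succ M ih =>
    push_cast at hM
    obtain ⟨c, D, hdisj, hlaw, hq⟩ := ih (by linarith)
    obtain ⟨i, hi⟩ := h (Finset.univ.biUnion D)
    have hE : ∑ ω ∈ Finset.univ.biUnion D, q ω ≤ ε - η := by
      rw [Finset.sum_biUnion fun a _ b _ hab => hdisj hab]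
      refine (Finset.sum_le_sum fun m _ => hq m).trans ?_
      rw [Finset.sum_const, Finset.card_univ, Fintype.card_fin, nsmul_eq_mul, ← div_eq_mul_inv,
        div_le_iff₀' ht]
      linarith
    obtain ⟨D', hdisj', hlaw', hq'⟩ := exists_disjoint_decoding_set (hp i) ht hi hE
    have hdisj'' : ∀ m, Disjoint (D m) D' := fun m =>
      hdisj'.mono_left (Finset.subset_biUnion_of_mem D (Finset.mem_univ m))
    refine ⟨Fin.cons i c, Fin.cons D' D, ?_, ?_, ?_⟩
    · rw [pairwise_fin_succ_iff_of_isSymm]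
      exact ⟨fun m => (hdisj'' m).symm, hdisj⟩
    · exact Fin.forall_fin_succ.2 ⟨hlaw', hlaw⟩
    · exact Fin.forall_fin_succ.2 ⟨hq', hq⟩

lemma sum_le_sum_filter_lt_add {p q : Ω → ℝ} (hp : ∀ ω, 0 ≤ p ω) (hq : ∀ ω, 0 ≤ q ω) {t : ℝ}
    (ht : 0 ≤ t) (D : Finset Ω) :
    ∑ ω ∈ D, p ω ≤ ∑ ω with t * q ω < p ω, p ω + t * ∑ ω ∈ D, q ω := by
  rw [Finset.mul_sum, ← Finset.univ_inter D, ← Finset.sum_ite_mem, ← Finset.sum_ite_mem,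
    Finset.sum_filter, ← Finset.sum_add_distrib]
  refine Finset.sum_le_sum fun ω _ => ?_
  have hq' := mul_nonneg ht (hq ω)
  split_ifs <;> linarith [hp ω]

end AbstractCoding

section FeedbackCodes

variable {n M : ℕ} {W : X → Y → ℝ} {P : X → ℝ} {ε : ℝ}

omit [Fintype X] in
lemma errProb_nonneg (hW : IsChannel W) (enc : Fin M → List Y → X)
    (dec : (Fin n → Y) → Fin M) : 0 ≤ errProb W n M enc dec := by
  refine mul_nonneg (by positivity) (Finset.sum_nonneg fun m _ => Finset.sum_nonneg fun y _ =>
    mul_nonneg ((isDist_pathLaw hW (enc m)).1 y) ?_)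
  split_ifs <;> norm_num

omit [Fintype X] in
lemma errProb_eq_one_sub (hW : IsChannel W) (hM : M ≠ 0) (enc : Fin M → List Y → X)
    (dec : (Fin n → Y) → Fin M) :
    errProb W n M enc dec
      = 1 - (M : ℝ)⁻¹ * ∑ m, ∑ y : Fin n → Y with dec y = m, pathLaw W (enc m) y := by
  have hterm : ∀ m y, pathLaw W (enc m) y * (if dec y = m then 0 else 1)
      = pathLaw W (enc m) y - if dec y = m then pathLaw W (enc m) y else 0 := fun m y => by
    split_ifs <;> simp
  have hM' : (M : ℝ) ≠ 0 := Nat.cast_ne_zero.2 hM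
  change (M : ℝ)⁻¹ * ∑ m, ∑ y : Fin n → Y, pathLaw W (enc m) y * (if dec y = m then 0 else 1) = _
  simp only [hterm, Finset.sum_sub_distrib, (isDist_pathLaw hW _).2,
    Finset.sum_const, Finset.card_univ, Fintype.card_fin, nsmul_eq_mul, mul_one, mul_sub,
    inv_mul_cancel₀ hM', Finset.sum_filter]

lemma exists_forall_mem_eq {Ω : Type*} (hM : M ≠ 0) {D : Fin M → Finset Ω}
    (hD : Pairwise (Function.onFun Disjoint D)) :
    ∃ dec : Ω → Fin M, ∀ m, ∀ ω ∈ D m, dec ω = m := by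
  have : NeZero M := ⟨hM⟩
  refine ⟨fun ω => if h : ∃ m, ω ∈ D m then h.choose else 0, fun m ω hω => ?_⟩
  have h : ∃ m, ω ∈ D m := ⟨m, hω⟩
  simp only [dif_pos h]
  by_contra hne
  exact Finset.disjoint_left.1 (hD hne) h.choose_spec hω

omit [Fintype X] in
lemma exists_errProb_le (hW : IsChannel W) (hM : M ≠ 0) (enc : Fin M → List Y → X)
    {D : Fin M → Finset (Fin n → Y)} (hD : Pairwise (Function.onFun Disjoint D))
    (hlaw : ∀ m, 1 - ε ≤ ∑ y ∈ D m, pathLaw W (enc m) y) :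
    ∃ dec, errProb W n M enc dec ≤ ε := by
  obtain ⟨dec, hdec⟩ := exists_forall_mem_eq hM hD
  refine ⟨dec, ?_⟩
  have hsucc : ∀ m, 1 - ε ≤ ∑ y : Fin n → Y with dec y = m, pathLaw W (enc m) y := fun m =>
    (hlaw m).trans (Finset.sum_le_sum_of_subset_of_nonneg
      (fun y hy => Finset.mem_filter.2 ⟨Finset.mem_univ y, hdec m y hy⟩)
      fun y _ _ => (isDist_pathLaw hW (enc m)).1 y)
  have hM' : (0 : ℝ) < M := Nat.cast_pos.2 (Nat.pos_of_ne_zero hM)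
  have hsum : M * (1 - ε) ≤ ∑ m, ∑ y : Fin n → Y with dec y = m, pathLaw W (enc m) y := by
    have hcard := Finset.card_nsmul_le_sum Finset.univ _ (1 - ε) fun m _ => hsucc m
    rwa [Finset.card_univ, Fintype.card_fin, nsmul_eq_mul] at hcard
  rw [errProb_eq_one_sub hW hM, sub_le_comm]
  rwa [← le_inv_mul_iff₀ hM'] at hsum

/-- The message-set sizes whose supremum is `M*_fb(n, ε)`. -/
def achievableSizes (W : X → Y → ℝ) (n : ℕ) (ε : ℝ) : Set ℝ :=
  {m | ∃ R : ℝ, m = ⌈exp (n * R)⌉₊ ∧ minErr W n R ≤ ε}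

omit [Fintype X] in
lemma natCast_mem_achievableSizes (hW : IsChannel W) (hn : n ≠ 0) (hM : M ≠ 0)
    {enc : Fin M → List Y → X} {dec : (Fin n → Y) → Fin M} (h : errProb W n M enc dec ≤ ε) :
    (M : ℝ) ∈ achievableSizes W n ε := by
  have hR : ⌈exp (n * (log M / n))⌉₊ = M := by
    rw [mul_div_cancel₀ _ (Nat.cast_ne_zero.2 hn),
      exp_log (Nat.cast_pos.2 (Nat.pos_of_ne_zero hM)), Nat.ceil_natCast]
  refine ⟨log M / n, by rw [hR], le_trans ?_ h⟩
  rw [minErr, hR]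
  refine csInf_le ⟨0, ?_⟩ ⟨enc, dec, rfl⟩
  rintro _ ⟨enc, dec, rfl⟩
  exact errProb_nonneg hW enc dec

omit [Fintype X] in
lemma one_mem_achievableSizes [Nonempty X] (hW : IsChannel W) (hε : 0 ≤ ε) (hn : n ≠ 0) :
    (1 : ℝ) ∈ achievableSizes W n ε := by
  have h := natCast_mem_achievableSizes (ε := ε) hW hn one_ne_zero
    (enc := fun _ _ => Classical.arbitrary X) (dec := fun _ => 0) (by simpa [errProb] using hε)
  rwa [Nat.cast_one] at h

lemma pathLaw_eq_exp_mul_prod (hW : IsChannel W) (hq : ∀ y, 0 < qStar W y) (f : List Y → X)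
    {y : Fin n → Y} (h : pathLaw W f y ≠ 0) :
    pathLaw W f y = exp (n * capacity W + pathSum (centDens W) f y) * ∏ k, qStar W (y k) := by
  have hsum : n * capacity W + pathSum (centDens W) f y
      = ∑ k : Fin n, iStar W (f ((List.ofFn y).take (k : ℕ))) (y k) := by
    simp [pathSum, centDens, Finset.sum_sub_distrib]
  rw [hsum, exp_sum, ← Finset.prod_mul_distrib, pathLaw]
  refine Finset.prod_congr rfl fun k _ => ?_
  have hk : W (f ((List.ofFn y).take (k : ℕ))) (y k) ≠ 0 :=
    Finset.prod_ne_zero_iff.1 h k (Finset.mem_univ k)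
  rw [iStar, exp_log (div_pos (((hW _).1 _).lt_of_ne' hk) (hq _)),
    div_mul_cancel₀ _ (hq (y k)).ne']

lemma pathLaw_le_exp_mul_prod_iff (hW : IsChannel W) (hq : ∀ y, 0 < qStar W y) (f : List Y → X)
    {y : Fin n → Y} (h : pathLaw W f y ≠ 0) {L : ℝ} :
    pathLaw W f y ≤ exp (n * capacity W + L) * ∏ k, qStar W (y k)
      ↔ pathSum (centDens W) f y ≤ L := by
  rw [pathLaw_eq_exp_mul_prod hW hq f h, mul_le_mul_iff_left₀ (Finset.prod_pos fun k _ => hq _),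
    exp_le_exp, add_le_add_iff_left]

lemma exists_encoder_sum_pathLaw_le (hW : IsChannel W) (hq : ∀ y, 0 < qStar W y)
    {U : ℕ → ℝ → ℝ} (hU : IsSupersolution W (qStar W) (centDens W) U) {L : ℝ}
    (hU0 : ∀ s, (if s ≤ L then (1 : ℝ) else 0) ≤ U 0 s) (E : Finset (Fin n → Y)) :
    ∃ f : List Y → X,
      ∑ y : Fin n → Y with pathLaw W f y ≤ exp (n * capacity W + L) * ∏ k, qStar W (y k),
          pathLaw W f y + ∑ y ∈ E, pathLaw W f y
        ≤ U n 0 + ∑ y ∈ E, ∏ k, qStar W (y k) := by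
  obtain ⟨f, hf⟩ := hU.exists_encoder hW 0 fun y : Fin n → Y => if y ∈ E then 1 else 0
  simp only [mul_ite, mul_one, mul_zero, Finset.sum_ite_mem, Finset.univ_inter, mul_add,
    Finset.sum_add_distrib, zero_add] at hf
  refine ⟨f, le_trans ?_ hf⟩
  gcongr
  rw [Finset.sum_filter]
  refine Finset.sum_le_sum fun y _ => ?_
  by_cases h0 : pathLaw W f y = 0
  · simp [h0]
  · simp only [pathLaw_le_exp_mul_prod_iff hW hq f h0]
    rw [← mul_boole]
    exact mul_le_mul_of_nonneg_left (hU0 _) ((isDist_pathLaw hW f).1 y)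

/-- Non-asymptotic achievability: a supersolution whose terminal value dominates the event that
the accumulated information density is at most `n C + L` yields a code of about
`exp (n C + L) (ε - U n 0)` messages. -/
theorem exp_mul_sub_le_Mfb (hW : IsChannel W) (hq : ∀ y, 0 < qStar W y) (hn : n ≠ 0)
    (hε : 0 ≤ ε) (hbdd : BddAbove (achievableSizes W n ε)) {U : ℕ → ℝ → ℝ}
    (hU : IsSupersolution W (qStar W) (centDens W) U) {L : ℝ}
    (hU0 : ∀ s, (if s ≤ L then (1 : ℝ) else 0) ≤ U 0 s) :
    exp (n * capacity W + L) * (ε - U n 0) / 2 ≤ Mfb W n ε := by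
  set A := exp (n * capacity W + L) * (ε - U n 0)
  rcases le_total A 2 with hA | hA
  · obtain ⟨P, hP, -⟩ := hU 0 0
    have : Nonempty X := ⟨(hP.exists_le_sum_mul 0).choose⟩
    exact (show A / 2 ≤ 1 by linarith).trans (le_csSup hbdd (one_mem_achievableSizes hW hε hn))
  have hM : ⌊A⌋₊ ≠ 0 := (Nat.floor_pos.2 (one_le_two.trans hA)).ne'
  obtain ⟨enc, D, hD, hlaw, -⟩ := exists_pairwise_disjoint_decoding_sets
    (M := ⌊A⌋₊) (ε := ε) (η := U n 0)
    (p := fun (f : List Y → X) (y : Fin n → Y) => pathLaw W f y) (fun f => isDist_pathLaw hW f)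
    (exp_pos _) (exists_encoder_sum_pathLaw_le hW hq hU hU0) (Nat.floor_le (by linarith))
  obtain ⟨dec, hdec⟩ := exists_errProb_le hW hM enc hD hlaw
  refine le_trans ?_ (le_csSup hbdd (natCast_mem_achievableSizes hW hn hM hdec))
  linarith [Nat.lt_floor_add_one A]

lemma one_sub_sub_le_errProb (hW : IsChannel W) (hq : ∀ y, 0 < qStar W y)
    (hq1 : ∑ y, qStar W y = 1) (hM : M ≠ 0) {δ L : ℝ}
    (hδ : ∀ f : List Y → X,
      ∑ y : Fin n → Y with L < pathSum (centDens W) f y, pathLaw W f y ≤ δ)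
    (enc : Fin M → List Y → X) (dec : (Fin n → Y) → Fin M) :
    1 - δ - exp (n * capacity W + L) / M ≤ errProb W n M enc dec := by
  have htail : ∀ f : List Y → X, ∑ y : Fin n → Y with
      exp (n * capacity W + L) * ∏ k, qStar W (y k) < pathLaw W f y, pathLaw W f y ≤ δ := by
    refine fun f => le_of_eq_of_le ?_ (hδ f)
    rw [Finset.sum_filter, Finset.sum_filter]
    refine Finset.sum_congr rfl fun y _ => ?_
    by_cases h0 : pathLaw W f y = 0
    · simp [h0]
    · simp only [← not_le, pathLaw_le_exp_mul_prod_iff hW hq f h0]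
  have hdecode : ∀ m, ∑ y : Fin n → Y with dec y = m, pathLaw W (enc m) y ≤ δ
      + exp (n * capacity W + L) * ∑ y : Fin n → Y with dec y = m, ∏ k, qStar W (y k) := fun m =>
    (sum_le_sum_filter_lt_add (isDist_pathLaw hW (enc m)).1
      (fun y => Finset.prod_nonneg fun k _ => (hq (y k)).le) (exp_pos _).le _).trans
        (by gcongr; exact htail (enc m))
  have hprod : ∑ y : Fin n → Y, ∏ k, qStar W (y k) = 1 := by
    rw [← Fintype.sum_pow, hq1, one_pow]
  have hsum := Finset.sum_le_sum fun m (_ : m ∈ Finset.univ) => hdecode m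
  rw [Finset.sum_add_distrib, ← Finset.mul_sum, Finset.sum_fiberwise, hprod, Finset.sum_const,
    Finset.card_univ, Fintype.card_fin, nsmul_eq_mul, mul_one] at hsum
  have hM' : (0 : ℝ) < M := Nat.cast_pos.2 (Nat.pos_of_ne_zero hM)
  rw [errProb_eq_one_sub hW hM, sub_sub]
  gcongr
  rw [inv_mul_le_iff₀ hM', mul_add, mul_div_cancel₀ _ hM'.ne']
  exact hsum

lemma exists_abs_le {α β : Type*} [Finite α] [Finite β] (j : α → β → ℝ) :
    ∃ b, ∀ x y, |j x y| ≤ b := by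
  obtain ⟨b, hb⟩ := (Set.finite_range fun z : α × β => |j z.1 z.2|).bddAbove
  exact ⟨b, fun x y => hb ⟨(x, y), rfl⟩⟩

omit [Fintype X] in
lemma exists_errProb_lt_of_minErr_lt [Nonempty X] {R : ℝ} (h : minErr W n R < ε) :
    ∃ enc dec, errProb W n ⌈exp (n * R)⌉₊ enc dec < ε := by
  obtain ⟨_, ⟨enc, dec, rfl⟩, hlt⟩ := exists_lt_of_csInf_lt
    (s := {e | ∃ enc dec, e = errProb W n ⌈exp (n * R)⌉₊ enc dec})
    ⟨_, fun _ _ => Classical.arbitrary X, fun _ => ⟨0, Nat.ceil_pos.2 (exp_pos _)⟩, rfl⟩ h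
  exact ⟨enc, dec, hlt⟩

/-- A converse on the `√n` scale, far from sharp. -/
theorem exists_forall_mem_achievableSizes_le (hW : IsChannel W) (hcol : NoZeroColumn W)
    (hP : P ∈ capacityAchievers W) (hε : ε < 1) :
    ∃ a, ∀ᶠ n : ℕ in atTop, ∀ m ∈ achievableSizes W n ε,
      m ≤ exp (n * capacity W + a * √n) := by
  obtain ⟨b, hb⟩ := exists_abs_le (centDens W)
  have : Nonempty X := ⟨(hP.1.exists_le_sum_mul 0).choose⟩
  set δ := (1 - ε) / 4 with hδ
  have hδ0 : 0 < δ := by linarith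
  set L := (b ^ 2 / δ + 1) with hL
  have hL1 : 1 ≤ L := le_add_of_nonneg_left (by positivity)
  refine ⟨L + |log δ|, ?_⟩
  filter_upwards [eventually_ge_atTop 1] with n hn
  rintro _ ⟨R, rfl, hR⟩
  have hn' : (1 : ℝ) ≤ n := by exact_mod_cast hn
  have hsqrt : 1 ≤ √n := one_le_sqrt.2 hn'
  have htail : ∀ f : List Y → X,
      ∑ y : Fin n → Y with L * √n < pathSum (centDens W) f y, pathLaw W f y ≤ δ := fun f => by
    refine (sum_pathLaw_lt_pathSum_le hW (sum_mul_centDens_nonpos hW hcol hP) hb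
      (by positivity) f).trans ?_
    rw [mul_pow, sq_sqrt (by positivity), div_le_iff₀ (by positivity)]
    have hbL : b ^ 2 ≤ δ * L := by rw [hL, mul_add, mul_div_cancel₀ _ hδ0.ne']; linarith
    have hLL : δ * L ≤ δ * L ^ 2 := by gcongr; exact le_self_pow₀ hL1 two_ne_zero
    nlinarith
  obtain ⟨enc, dec, hlt⟩ :=
    exists_errProb_lt_of_minErr_lt (hR.trans_lt (by linarith : ε < 1 - 2 * δ))
  have hM : ⌈exp (n * R)⌉₊ ≠ 0 := (Nat.ceil_pos.2 (exp_pos _)).ne'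
  have hM' : (0 : ℝ) < ⌈exp (n * R)⌉₊ := Nat.cast_pos.2 (Nat.pos_of_ne_zero hM)
  have hle := one_sub_sub_le_errProb hW (qStar_pos hW hcol hP) (isDist_qStar hW hP).2 hM htail
    enc dec
  have hratio : δ ≤ exp (n * capacity W + L * √n) / ⌈exp (n * R)⌉₊ := by linarith
  rw [le_div_iff₀ hM', ← le_div_iff₀' hδ0] at hratio
  refine hratio.trans ?_
  have hlog : -log δ ≤ |log δ| * √n :=
    (neg_le_abs _).trans (le_mul_of_one_le_right (abs_nonneg _) hsqrt)
  nth_rw 1 [← exp_log hδ0]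
  rw [← exp_sub, exp_le_exp]
  linarith

end FeedbackCodes

section Gaussian

lemma gpdf_eq_gaussianPDFReal : gpdf = ProbabilityTheory.gaussianPDFReal 0 1 := by
  ext u
  simp [gpdf, ProbabilityTheory.gaussianPDFReal]

lemma gpdf_pos (u : ℝ) : 0 < gpdf u := by
  unfold gpdf
  positivity

lemma gpdf_neg (u : ℝ) : gpdf (-u) = gpdf u := by
  simp [gpdf]

lemma continuous_gpdf : Continuous gpdf := by
  unfold gpdf
  fun_prop

lemma integrable_gpdf : Integrable gpdf :=
  gpdf_eq_gaussianPDFReal ▸ ProbabilityTheory.integrable_gaussianPDFReal 0 1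

lemma gcdf_eq_cdf : gcdf = ProbabilityTheory.cdf (ProbabilityTheory.gaussianReal 0 1) := by
  ext t
  rw [ProbabilityTheory.cdf_eq_real, measureReal_def,
    ProbabilityTheory.gaussianReal_apply_eq_integral _ one_ne_zero, ENNReal.toReal_ofReal, gcdf,
    gpdf_eq_gaussianPDFReal]
  exact integral_nonneg fun x => ProbabilityTheory.gaussianPDFReal_nonneg _ _ _

lemma tendsto_gcdf_atTop : Tendsto gcdf atTop (𝓝 1) :=
  gcdf_eq_cdf ▸ ProbabilityTheory.tendsto_cdf_atTop _

lemma tendsto_gcdf_atBot : Tendsto gcdf atBot (𝓝 0) :=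
  gcdf_eq_cdf ▸ ProbabilityTheory.tendsto_cdf_atBot _

lemma gcdf_le_one (t : ℝ) : gcdf t ≤ 1 :=
  gcdf_eq_cdf ▸ ProbabilityTheory.cdf_le_one _ t

lemma hasDerivAt_gcdf (t : ℝ) : HasDerivAt gcdf (gpdf t) t := by
  have hgcdf : gcdf = fun t => gcdf 0 + ∫ u in (0 : ℝ)..t, gpdf u := by
    ext t
    rw [← intervalIntegral.integral_Iic_sub_Iic integrable_gpdf.integrableOn
      integrable_gpdf.integrableOn]
    exact (add_sub_cancel _ _).symm
  rw [hgcdf]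
  exact (continuous_gpdf.integral_hasStrictDerivAt 0 t).hasDerivAt.const_add _

lemma continuous_gcdf : Continuous gcdf :=
  continuous_iff_continuousAt.2 fun t => (hasDerivAt_gcdf t).continuousAt

lemma gcdf_neg (t : ℝ) : gcdf (-t) = 1 - gcdf t := by
  have hone : ∫ u, gpdf u = 1 :=
    gpdf_eq_gaussianPDFReal ▸ ProbabilityTheory.integral_gaussianPDFReal_eq_one 0 one_ne_zero
  have hneg : gcdf (-t) = ∫ u in Ioi t, gpdf u := by
    simpa only [gpdf_neg, neg_neg, gcdf] using integral_comp_neg_Iic (-t) gpdf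
  rw [hneg, ← hone, gcdf, eq_sub_iff_add_eq']
  exact intervalIntegral.integral_Iic_add_Ioi integrable_gpdf.integrableOn
    integrable_gpdf.integrableOn

lemma gcdf_zero : gcdf 0 = 1 / 2 := by
  have h := gcdf_neg 0
  rw [neg_zero] at h
  linarith

lemma strictMono_gcdf : StrictMono gcdf :=
  strictMono_of_deriv_pos fun t => (hasDerivAt_gcdf t).deriv ▸ gpdf_pos t

lemma gcdf_gcdfInv {p : ℝ} (hp0 : 0 < p) (hp1 : p < 1) : gcdf (gcdfInv p) = p :=
  Function.invFun_eq <| mem_range_of_exists_le_of_exists_ge continuous_gcdf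
    (tendsto_gcdf_atBot.eventually_le_const hp0).exists
    (tendsto_gcdf_atTop.eventually_const_le hp1).exists

lemma gcdfInv_nonpos {p : ℝ} (hp0 : 0 < p) (hp : p ≤ 1 / 2) : gcdfInv p ≤ 0 := by
  rwa [← strictMono_gcdf.le_iff_le, gcdf_gcdfInv hp0 (by linarith), gcdf_zero]

lemma gcdfInv_pos {p : ℝ} (hp : 1 / 2 < p) (hp1 : p < 1) : 0 < gcdfInv p := by
  rwa [← strictMono_gcdf.lt_iff_lt, gcdf_gcdfInv (by linarith) hp1, gcdf_zero]

lemma hasDerivAt_gpdf (x : ℝ) : HasDerivAt gpdf (-(x * gpdf x)) x := by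
  have hexponent : HasDerivAt (fun u : ℝ => -u ^ 2 / 2) (-x) x :=
    ((hasDerivAt_pow 2 x).neg.div_const 2).congr_deriv (by ring)
  exact (hexponent.exp.const_mul (√(2 * π))⁻¹).congr_deriv (by rw [gpdf]; ring)

lemma abs_pow_mul_gpdf_le (k : ℕ) (x : ℝ) : |x ^ k * gpdf x| ≤ k.factorial := by
  have hpow : |x| ^ k ≤ k.factorial * exp |x| :=
    (div_le_iff₀' (by positivity)).1 (pow_div_factorial_le_exp _ (abs_nonneg x) k)
  have hsqrt : exp (1 / 2) ≤ √(2 * π) := by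
    rw [exp_half]
    exact sqrt_le_sqrt (by linarith [exp_one_lt_three, pi_gt_three])
  have hexp : exp |x| * exp (-x ^ 2 / 2) ≤ exp (1 / 2) := by
    rw [← exp_add, exp_le_exp]
    nlinarith [sq_nonneg (|x| - 1), sq_abs x]
  rw [abs_mul, abs_pow, abs_of_pos (gpdf_pos x), gpdf]
  calc |x| ^ k * ((√(2 * π))⁻¹ * exp (-x ^ 2 / 2))
      ≤ k.factorial * exp |x| * ((√(2 * π))⁻¹ * exp (-x ^ 2 / 2)) := by gcongr
    _ = k.factorial * ((√(2 * π))⁻¹ * (exp |x| * exp (-x ^ 2 / 2))) := by ring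
    _ ≤ k.factorial * ((√(2 * π))⁻¹ * √(2 * π)) := by gcongr; exact hexp.trans hsqrt
    _ = k.factorial := by rw [inv_mul_cancel₀ (by positivity), mul_one]

lemma hasDerivAt_mul_gpdf (x : ℝ) :
    HasDerivAt (fun x => x * gpdf x) (gpdf x - x ^ 2 * gpdf x) x :=
  ((hasDerivAt_id' x).mul (hasDerivAt_gpdf x)).congr_deriv (by ring)

lemma lipschitzWith_mul_gpdf : LipschitzWith 3 fun x => x * gpdf x := by
  refine lipschitzWith_of_nnnorm_deriv_le (fun x => (hasDerivAt_mul_gpdf x).differentiableAt)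
    fun x => ?_
  have h0 := abs_pow_mul_gpdf_le 0 x
  have h2 := abs_pow_mul_gpdf_le 2 x
  norm_num [Nat.factorial] at h0 h2
  rw [(hasDerivAt_mul_gpdf x).deriv, ← NNReal.coe_le_coe, coe_nnnorm, norm_eq_abs]
  exact (abs_sub _ _).trans (by rw [abs_mul]; norm_num; linarith)

end Gaussian

section Calculus

variable {f g f' g' F G H : ℝ → ℝ} {K L : NNReal}

lemma hasDerivAt_ite_nonneg (hf : ∀ x, HasDerivAt f (f' x) x) (hg : ∀ x, HasDerivAt g (g' x) x)
    (h0 : f 0 = g 0) (h0' : f' 0 = g' 0) (x : ℝ) :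
    HasDerivAt (fun x => if 0 ≤ x then f x else g x) (if 0 ≤ x then f' x else g' x) x := by
  rcases lt_trichotomy x 0 with hx | rfl | hx
  · rw [if_neg hx.not_ge]
    refine (hg x).congr_of_eventuallyEq ?_
    filter_upwards [Iio_mem_nhds hx] with y hy using if_neg (not_le.2 hy)
  · rw [if_pos le_rfl, ← hasDerivWithinAt_univ, ← Iio_union_Ici (a := (0 : ℝ))]
    refine HasDerivWithinAt.union ?_ ?_
    · rw [h0']
      exact (hg 0).hasDerivWithinAt.congr (fun y hy => if_neg (not_le.2 hy)) (by simp [h0])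
    · exact (hf 0).hasDerivWithinAt.congr (fun y hy => if_pos hy) (by simp)
  · rw [if_pos hx.le]
    refine (hf x).congr_of_eventuallyEq ?_
    filter_upwards [Ioi_mem_nhds hx] with y hy using if_pos (le_of_lt hy)

lemma lipschitzWith_ite_nonneg (hf : LipschitzWith K f) (hg : LipschitzWith L g)
    (h0 : f 0 = g 0) : LipschitzWith (K + L) fun x => if 0 ≤ x then f x else g x := by
  have hite : (fun x => if 0 ≤ x then f x else g x)
      = fun x => f (max x 0) + (g (min x 0) - g 0) := by
    ext x
    split_ifs with hx
    · simp [hx]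
    · simp [(not_le.1 hx).le, h0]
  rw [hite]
  have h := (hf.comp (LipschitzWith.id.max_const 0)).add
    ((hg.comp (LipschitzWith.id.min_const 0)).sub (LipschitzWith.const (g 0)))
  rwa [mul_one, mul_one, add_zero] at h

lemma abs_sub_sub_mul_le {a b C : ℝ} (hF : ∀ u, HasDerivAt F (G u) u)
    (hG : ∀ u ∈ uIcc a b, |G u - G a| ≤ C) : |F b - F a - G a * (b - a)| ≤ C * |b - a| := by
  have h := (convex_uIcc a b).norm_image_sub_le_of_norm_hasDerivWithin_le
    (f := fun u => F u - G a * u) (f' := fun u => G u - G a)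
    (fun u _ => ((hF u).sub ((hasDerivAt_id' u).const_mul (G a))).hasDerivWithinAt.congr_deriv
      (by rw [mul_one])) hG left_mem_uIcc right_mem_uIcc
  rw [norm_eq_abs, norm_eq_abs] at h
  convert h using 2
  ring

lemma abs_sub_sub_sub_le_of_lipschitzWith (hF : ∀ u, HasDerivAt F (G u) u)
    (hG : ∀ u, HasDerivAt G (H u) u) (hH : LipschitzWith K H) (z w : ℝ) :
    |F (z + w) - F z - G z * w - H z / 2 * w ^ 2| ≤ K * |w| ^ 3 := by
  have hG' : ∀ u ∈ uIcc z (z + w), |G u - H z * (u - z) - (G z - H z * (z - z))|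
      ≤ K * |w| * |w| := fun u hu => by
    have huw : |u - z| ≤ |w| := by simpa using abs_sub_left_of_mem_uIcc hu
    have hH' : ∀ v ∈ uIcc z u, |H v - H z| ≤ K * |w| := fun v hv =>
      (hH.dist_le_mul v z).trans
        (by gcongr; exact (abs_sub_left_of_mem_uIcc hv).trans huw)
    calc |G u - H z * (u - z) - (G z - H z * (z - z))|
        = |G u - G z - H z * (u - z)| := by ring_nf
      _ ≤ K * |w| * |u - z| := abs_sub_sub_mul_le hG hH'
      _ ≤ K * |w| * |w| := by gcongr
  have h := abs_sub_sub_mul_le (F := fun u => F u - H z / 2 * (u - z) ^ 2)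
    (fun u => ((hF u).sub ((((hasDerivAt_id' u).sub_const z).pow 2).const_mul
      (H z / 2))).congr_deriv (by ring)) hG'
  convert h using 1 <;> simp only [add_sub_cancel_left, sub_self] <;> ring_nf

lemma abs_comp_mul_exp_sub_le {C : ℝ} (hF : ∀ u, HasDerivAt F (G u) u)
    (hG : ∀ u, HasDerivAt G (H u) u) (hC : ∀ v, |v * G v + v ^ 2 * H v| ≤ C) (z τ : ℝ) :
    |F (z * exp (-τ / 2)) - F z + τ / 2 * (z * G z)| ≤ C * τ ^ 2 := by
  obtain ⟨w, hwτ, hw0, hw⟩ : ∃ w : ℝ → ℝ, w τ = z * exp (-τ / 2) ∧ w 0 = z ∧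
      ∀ u, HasDerivAt w (-(w u / 2)) u :=
    ⟨fun u => z * exp (-u / 2), rfl, by simp, fun u =>
      (((hasDerivAt_neg u).div_const 2).exp.const_mul z).congr_deriv (by ring)⟩
  have hF' : ∀ u, HasDerivAt (fun u => F (w u)) (-(w u / 2 * G (w u))) u := fun u =>
    ((hF (w u)).comp u (hw u)).congr_deriv (by ring)
  have hG' : ∀ u, HasDerivAt (fun u => -(w u / 2 * G (w u)))
      ((w u * G (w u) + w u ^ 2 * H (w u)) / 4) u := fun u =>
    (((hw u).div_const 2).mul ((hG (w u)).comp u (hw u))).neg.congr_deriv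
      (by simp only [Function.comp_apply]; ring)
  have hbound : ∀ u, ‖(w u * G (w u) + w u ^ 2 * H (w u)) / 4‖ ≤ C := fun u => by
    rw [norm_div, norm_eq_abs, norm_ofNat]
    linarith [hC (w u), abs_nonneg (w u * G (w u) + w u ^ 2 * H (w u))]
  have hlip : ∀ u ∈ uIcc 0 τ, |-(w u / 2 * G (w u)) - -(w 0 / 2 * G (w 0))| ≤ C * |τ| :=
    fun u hu => by
      refine (convex_univ.norm_image_sub_le_of_norm_hasDerivWithin_le
        (fun v _ => (hG' v).hasDerivWithinAt) (fun v _ => hbound v) (mem_univ 0)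
        (mem_univ u)).trans ?_
      gcongr
      · exact (abs_nonneg _).trans (hC 0)
      · simpa using abs_sub_left_of_mem_uIcc hu
  have h := abs_sub_sub_mul_le hF' hlip
  rw [hwτ, hw0, sub_zero, mul_assoc, abs_mul_abs_self] at h
  convert h using 2 <;> ring

end Calculus

section OscillatingBrownianMotion

variable {σ₁ σ₂ : ℝ}

/-- The diffusion coefficient of the oscillating Brownian motion: `σ₁` on `[0, ∞)` and `σ₂` on
`(-∞, 0)`. -/
def oscScale (σ₁ σ₂ z : ℝ) : ℝ := if 0 ≤ z then σ₁ else σ₂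

/-- The probability that the oscillating Brownian motion with coefficients `σ₁` and `σ₂`, started
at `z`, is negative at time one. -/
def negProb (σ₁ σ₂ z : ℝ) : ℝ :=
  if 0 ≤ z then 2 * σ₁ / (σ₁ + σ₂) * (1 - gcdf (z / σ₁))
  else 1 - 2 * σ₂ / (σ₁ + σ₂) * gcdf (z / σ₂)

/-- The derivative of `negProb`. -/
def negProbDeriv (σ₁ σ₂ z : ℝ) : ℝ := -(2 / (σ₁ + σ₂)) * gpdf (z / oscScale σ₁ σ₂ z)

/-- The second derivative of `negProb`. -/
def negProbDeriv₂ (σ₁ σ₂ z : ℝ) : ℝ :=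
  2 / (σ₁ + σ₂) / oscScale σ₁ σ₂ z * (z / oscScale σ₁ σ₂ z * gpdf (z / oscScale σ₁ σ₂ z))

lemma oscScale_pos (h₁ : 0 < σ₁) (h₂ : 0 < σ₂) (z : ℝ) : 0 < oscScale σ₁ σ₂ z := by
  unfold oscScale
  split_ifs <;> assumption

lemma oscScale_div {r : ℝ} (hr : 0 < r) (z : ℝ) :
    oscScale σ₁ σ₂ (z / r) = oscScale σ₁ σ₂ z := by
  simp only [oscScale, le_div_iff₀ hr, zero_mul]

lemma hasDerivAt_negProb (h₁ : 0 < σ₁) (h₂ : 0 < σ₂) (z : ℝ) :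
    HasDerivAt (negProb σ₁ σ₂) (negProbDeriv σ₁ σ₂ z) z := by
  have hgcdf : ∀ σ u, HasDerivAt (fun z => gcdf (z / σ)) (gpdf (u / σ) * (1 / σ)) u := fun σ u =>
    (hasDerivAt_gcdf (u / σ)).comp (h := fun z => z / σ) u ((hasDerivAt_id' u).div_const σ)
  have h0 : 2 * σ₁ / (σ₁ + σ₂) * (1 - gcdf (0 / σ₁))
      = 1 - 2 * σ₂ / (σ₁ + σ₂) * gcdf (0 / σ₂) := by
    rw [zero_div, zero_div, gcdf_zero]
    field_simp
    ring
  refine (hasDerivAt_ite_nonneg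
    (f' := fun z => -(2 / (σ₁ + σ₂)) * gpdf (z / σ₁))
    (g' := fun z => -(2 / (σ₁ + σ₂)) * gpdf (z / σ₂))
    (fun u => (((hgcdf σ₁ u).const_sub 1).const_mul (2 * σ₁ / (σ₁ + σ₂))).congr_deriv
      (by field_simp))
    (fun u => (((hgcdf σ₂ u).const_mul (2 * σ₂ / (σ₁ + σ₂))).const_sub 1).congr_deriv
      (by field_simp)) h0 (by simp) z).congr_deriv ?_
  unfold negProbDeriv oscScale
  split_ifs <;> rfl

lemma hasDerivAt_negProbDeriv (z : ℝ) :
    HasDerivAt (negProbDeriv σ₁ σ₂) (negProbDeriv₂ σ₁ σ₂ z) z := by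
  have hgpdf : ∀ σ u, HasDerivAt (fun z => -(2 / (σ₁ + σ₂)) * gpdf (z / σ))
      (2 / (σ₁ + σ₂) / σ * (u / σ * gpdf (u / σ))) u := fun σ u =>
    (((hasDerivAt_gpdf (u / σ)).comp u ((hasDerivAt_id' u).div_const σ)).const_mul _).congr_deriv
      (by ring)
  convert hasDerivAt_ite_nonneg (hgpdf σ₁) (hgpdf σ₂) (by simp) (by simp) z using 1
  · ext u
    unfold negProbDeriv oscScale
    split_ifs <;> rfl
  · unfold negProbDeriv₂ oscScale
    split_ifs <;> rfl

lemma exists_lipschitzWith_negProbDeriv₂ (σ₁ σ₂ : ℝ) :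
    ∃ K, LipschitzWith K (negProbDeriv₂ σ₁ σ₂) := by
  have hlip : ∀ σ, LipschitzWith (‖2 / (σ₁ + σ₂) / σ‖₊ * (3 * ‖σ⁻¹‖₊))
      fun z => 2 / (σ₁ + σ₂) / σ * (z / σ * gpdf (z / σ)) := fun σ => by
    simpa only [Function.comp_def, smul_eq_mul, ← div_eq_inv_mul] using
      (lipschitzWith_smul (2 / (σ₁ + σ₂) / σ)).comp
        (lipschitzWith_mul_gpdf.comp (lipschitzWith_smul σ⁻¹))
  have h := lipschitzWith_ite_nonneg (hlip σ₁) (hlip σ₂) (by simp)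
  have heq : negProbDeriv₂ σ₁ σ₂ = fun z =>
      if 0 ≤ z then 2 / (σ₁ + σ₂) / σ₁ * (z / σ₁ * gpdf (z / σ₁))
      else 2 / (σ₁ + σ₂) / σ₂ * (z / σ₂ * gpdf (z / σ₂)) := by
    ext z
    unfold negProbDeriv₂ oscScale
    split_ifs <;> rfl
  exact ⟨_, heq ▸ h⟩

/-- The stationary form of the backward heat equation solved by `negProb (z / √t)`. -/
lemma oscScale_sq_mul_negProbDeriv₂ (h₁ : 0 < σ₁) (h₂ : 0 < σ₂) (z : ℝ) :
    oscScale σ₁ σ₂ z ^ 2 * negProbDeriv₂ σ₁ σ₂ z = -(z * negProbDeriv σ₁ σ₂ z) := by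
  have := (oscScale_pos h₁ h₂ z).ne'
  rw [negProbDeriv₂, negProbDeriv]
  field_simp

lemma mul_negProbDeriv (h₁ : 0 < σ₁) (h₂ : 0 < σ₂) (z : ℝ) :
    z * negProbDeriv σ₁ σ₂ z = -(2 * oscScale σ₁ σ₂ z / (σ₁ + σ₂)
      * (z / oscScale σ₁ σ₂ z * gpdf (z / oscScale σ₁ σ₂ z))) := by
  have := (oscScale_pos h₁ h₂ z).ne'
  rw [negProbDeriv]
  field_simp

lemma two_mul_oscScale_div_le (h₁ : 0 < σ₁) (h₂ : 0 < σ₂) (z : ℝ) :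
    2 * oscScale σ₁ σ₂ z / (σ₁ + σ₂) ≤ 2 := by
  rw [div_le_iff₀ (by positivity), oscScale]
  split_ifs <;> linarith

lemma abs_mul_negProbDeriv_le (h₁ : 0 < σ₁) (h₂ : 0 < σ₂) (z : ℝ) :
    |z * negProbDeriv σ₁ σ₂ z| ≤ 2 := by
  have hs := oscScale_pos h₁ h₂ z
  have hu := abs_pow_mul_gpdf_le 1 (z / oscScale σ₁ σ₂ z)
  rw [pow_one, Nat.factorial_one, Nat.cast_one] at hu
  rw [mul_negProbDeriv h₁ h₂, abs_neg, abs_mul, abs_of_pos (by positivity)]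
  exact (mul_le_mul (two_mul_oscScale_div_le h₁ h₂ z) hu (abs_nonneg _) two_pos.le).trans_eq
    (mul_one 2)

lemma abs_sq_mul_negProbDeriv₂_le (h₁ : 0 < σ₁) (h₂ : 0 < σ₂) (z : ℝ) :
    |z ^ 2 * negProbDeriv₂ σ₁ σ₂ z| ≤ 12 := by
  have hs := oscScale_pos h₁ h₂ z
  have hu := abs_pow_mul_gpdf_le 3 (z / oscScale σ₁ σ₂ z)
  have heq : z ^ 2 * negProbDeriv₂ σ₁ σ₂ z = 2 * oscScale σ₁ σ₂ z / (σ₁ + σ₂)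
      * ((z / oscScale σ₁ σ₂ z) ^ 3 * gpdf (z / oscScale σ₁ σ₂ z)) := by
    rw [negProbDeriv₂]
    field_simp
  rw [heq, abs_mul, abs_of_pos (by positivity)]
  exact (mul_le_mul (two_mul_oscScale_div_le h₁ h₂ z) hu (abs_nonneg _) two_pos.le).trans_eq
    (by norm_num [Nat.factorial])

lemma strictAnti_negProb (h₁ : 0 < σ₁) (h₂ : 0 < σ₂) : StrictAnti (negProb σ₁ σ₂) :=
  strictAnti_of_deriv_neg fun z => by
    rw [(hasDerivAt_negProb h₁ h₂ z).deriv, negProbDeriv, neg_mul, neg_lt_zero]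
    exact mul_pos (by positivity) (gpdf_pos _)

lemma continuous_negProb (h₁ : 0 < σ₁) (h₂ : 0 < σ₂) : Continuous (negProb σ₁ σ₂) :=
  continuous_iff_continuousAt.2 fun z => (hasDerivAt_negProb h₁ h₂ z).continuousAt

lemma negProb_nonneg (h₁ : 0 < σ₁) (h₂ : 0 < σ₂) (z : ℝ) : 0 ≤ negProb σ₁ σ₂ z := by
  have hpos : 0 ≤ negProb σ₁ σ₂ (max z 0) := by
    rw [negProb, if_pos (le_max_right z 0)]
    exact mul_nonneg (by positivity) (sub_nonneg.2 (gcdf_le_one _))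
  exact hpos.trans ((strictAnti_negProb h₁ h₂).antitone (le_max_left z 0))

lemma tendsto_negProb_atBot (σ₁ : ℝ) (h₂ : 0 < σ₂) : Tendsto (negProb σ₁ σ₂) atBot (𝓝 1) := by
  have h : Tendsto (fun z => 1 - 2 * σ₂ / (σ₁ + σ₂) * gcdf (z / σ₂)) atBot
      (𝓝 (1 - 2 * σ₂ / (σ₁ + σ₂) * 0)) :=
    ((tendsto_gcdf_atBot.comp (tendsto_id.atBot_div_const h₂)).const_mul _).const_sub 1
  rw [mul_zero, sub_zero] at h
  refine h.congr' ?_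
  filter_upwards [eventually_lt_atBot 0] with z hz using (if_neg hz.not_ge).symm

lemma negProb_neg_mul_gcdfInv_of_le (h₁ : 0 < σ₁) {p : ℝ} (hp0 : 0 < p) (hp : p ≤ 1 / 2) :
    negProb σ₁ σ₂ (-(σ₁ * gcdfInv p)) = 2 * σ₁ / (σ₁ + σ₂) * p := by
  have hz : 0 ≤ -(σ₁ * gcdfInv p) :=
    neg_nonneg.2 (mul_nonpos_of_nonneg_of_nonpos h₁.le (gcdfInv_nonpos hp0 hp))
  rw [negProb, if_pos hz, neg_div, mul_div_cancel_left₀ _ h₁.ne', gcdf_neg,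
    gcdf_gcdfInv hp0 (by linarith), sub_sub_cancel]

lemma negProb_neg_mul_gcdfInv_of_lt (h₂ : 0 < σ₂) {p : ℝ} (hp : 1 / 2 < p) (hp1 : p < 1) :
    negProb σ₁ σ₂ (-(σ₂ * gcdfInv p)) = 1 - 2 * σ₂ / (σ₁ + σ₂) * (1 - p) := by
  have hz : ¬ 0 ≤ -(σ₂ * gcdfInv p) :=
    not_le.2 (neg_lt_zero.2 (mul_pos h₂ (gcdfInv_pos hp hp1)))
  rw [negProb, if_neg hz, neg_div, mul_div_cancel_left₀ _ h₂.ne', gcdf_neg,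
    gcdf_gcdfInv (by linarith) hp1]

lemma negProb_quantile_of_le (h₁ : 0 < σ₁) (h₂ : 0 < σ₂) {β ε : ℝ} (hβ : β = σ₁ / σ₂) (hε : 0 < ε)
    (h : ε ≤ β / (1 + β)) :
    negProb σ₁ σ₂ (-(σ₁ * gcdfInv (1 / (2 * β) * (ε * (1 + β))))) = ε := by
  have hβ0 : 0 < β := hβ ▸ div_pos h₁ h₂
  have hσ : σ₁ = β * σ₂ := ((eq_div_iff h₂.ne').1 hβ).symm
  rw [le_div_iff₀ (by positivity)] at h
  rw [negProb_neg_mul_gcdfInv_of_le h₁ (by positivity), hσ]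
  · field_simp
    ring
  · rw [one_div_mul_eq_div, div_le_div_iff₀ (by positivity) two_pos]
    linarith

lemma negProb_quantile_of_lt (h₁ : 0 < σ₁) (h₂ : 0 < σ₂) {β ε : ℝ} (hβ : β = σ₁ / σ₂) (hε : ε < 1)
    (h : β / (1 + β) < ε) :
    negProb σ₁ σ₂ (-(σ₂ * gcdfInv (1 / 2 * (ε * (1 + β) + (1 - β))))) = ε := by
  have hβ0 : 0 < β := hβ ▸ div_pos h₁ h₂
  have hσ : σ₁ = β * σ₂ := ((eq_div_iff h₂.ne').1 hβ).symm
  rw [div_lt_iff₀ (by positivity)] at h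
  rw [negProb_neg_mul_gcdfInv_of_lt h₂ (by linarith) (by nlinarith), hσ]
  field_simp
  ring

lemma sum_mul_comp_add_le {ι : Type*} [Fintype ι] {p w : ι → ℝ} (hp : IsDist p)
    (hmean : ∑ i, p i * w i = 0) {b : ℝ} (hb : ∀ i, |w i| ≤ b) {F G H : ℝ → ℝ} {K : NNReal}
    (hF : ∀ u, HasDerivAt F (G u) u) (hG : ∀ u, HasDerivAt G (H u) u) (hH : LipschitzWith K H)
    (z : ℝ) :
    ∑ i, p i * F (z + w i) ≤ F z + H z / 2 * ∑ i, p i * w i ^ 2 + K * b ^ 3 := by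
  have hterm : ∀ i, F (z + w i) ≤ F z + G z * w i + H z / 2 * w i ^ 2 + K * b ^ 3 := fun i => by
    have htaylor := (le_abs_self _).trans (abs_sub_sub_sub_le_of_lipschitzWith hF hG hH z (w i))
    have hcube : K * |w i| ^ 3 ≤ K * b ^ 3 := by
      gcongr
      exact hb i
    linarith
  calc ∑ i, p i * F (z + w i)
      ≤ ∑ i, p i * (F z + G z * w i + H z / 2 * w i ^ 2 + K * b ^ 3) :=
        Finset.sum_le_sum fun i _ => mul_le_mul_of_nonneg_left (hterm i) (hp.1 i)
    _ = (∑ i, p i) * F z + G z * ∑ i, p i * w i + H z / 2 * ∑ i, p i * w i ^ 2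
          + (∑ i, p i) * (K * b ^ 3) := by
        simp only [mul_add, Finset.sum_add_distrib, Finset.sum_mul, Finset.mul_sum, mul_left_comm]
    _ = F z + H z / 2 * ∑ i, p i * w i ^ 2 + K * b ^ 3 := by
        rw [hp.2, hmean]
        ring

lemma sqrt_div_sqrt_add_one {t : ℝ} (ht : 0 < t) :
    √t / √(t + 1) = exp (-log ((t + 1) / t) / 2) := by
  rw [neg_div, exp_neg, exp_half, exp_log (by positivity), sqrt_div (by positivity), inv_div]

lemma log_add_one_div_mem_Icc {t : ℝ} (ht : 0 < t) :
    log ((t + 1) / t) ∈ Icc (1 / (t + 1)) (1 / t) := by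
  have hpos : 0 < (t + 1) / t := by positivity
  constructor
  · refine le_of_eq_of_le ?_ (one_sub_inv_le_log_of_pos hpos)
    field_simp
    ring
  · refine (log_le_sub_one_of_pos hpos).trans_eq ?_
    field_simp
    ring

lemma negProb_sub_le_negProb_div_sqrt (h₁ : 0 < σ₁) (h₂ : 0 < σ₂) {t : ℝ} (ht : 0 < t) (s : ℝ) :
    negProb σ₁ σ₂ (s / √t) - s / √t * negProbDeriv σ₁ σ₂ (s / √t) / (2 * t)
      ≤ negProb σ₁ σ₂ (s / √(t + 1)) + 15 / t ^ 2 := by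
  set z := s / √t with hz
  set τ := log ((t + 1) / t) with hτ
  set m := z * negProbDeriv σ₁ σ₂ z with hm
  obtain ⟨hτ_ge, hτ_le⟩ : 1 / (t + 1) ≤ τ ∧ τ ≤ 1 / t := log_add_one_div_mem_Icc ht
  have hτ_nonneg : 0 ≤ τ := le_trans (by positivity) hτ_ge
  have hscale : s / √(t + 1) = z * exp (-τ / 2) := by
    rw [hz, hτ, ← sqrt_div_sqrt_add_one ht, div_mul_div_cancel₀ (sqrt_pos.2 ht).ne']
  have htaylor := abs_comp_mul_exp_sub_le (C := 14) (hasDerivAt_negProb h₁ h₂)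
    hasDerivAt_negProbDeriv (fun v => (abs_add_le _ _).trans (by
      linarith [abs_mul_negProbDeriv_le h₁ h₂ v, abs_sq_mul_negProbDeriv₂_le h₁ h₂ v])) z τ
  rw [← hscale, ← hm] at htaylor
  have hsq : τ ^ 2 ≤ 1 / t ^ 2 := by
    rw [← one_div_pow]
    gcongr
  have hdrift : (τ - 1 / t) * m / 2 ≤ 1 / t ^ 2 := by
    have hτ_err : |τ - 1 / t| ≤ 1 / t ^ 2 := by
      rw [abs_sub_comm, abs_of_nonneg (sub_nonneg.2 hτ_le)]
      calc 1 / t - τ ≤ 1 / t - 1 / (t + 1) := by gcongr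
        _ = 1 / (t * (t + 1)) := by field_simp; ring
        _ ≤ 1 / t ^ 2 := by gcongr; nlinarith
    have := (le_abs_self _).trans_eq (abs_mul (τ - 1 / t) m) |>.trans
      (mul_le_mul hτ_err (abs_mul_negProbDeriv_le h₁ h₂ z) (abs_nonneg _) (by positivity))
    linarith
  calc negProb σ₁ σ₂ z - m / (2 * t)
      = negProb σ₁ σ₂ z - τ / 2 * m + (τ - 1 / t) * m / 2 := by field_simp; ring
    _ ≤ negProb σ₁ σ₂ (s / √(t + 1)) + 14 * τ ^ 2 + (τ - 1 / t) * m / 2 := by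
      linarith [(abs_le.1 htaylor).1]
    _ ≤ negProb σ₁ σ₂ (s / √(t + 1)) + 14 * (1 / t ^ 2) + 1 / t ^ 2 := by gcongr
    _ = negProb σ₁ σ₂ (s / √(t + 1)) + 15 / t ^ 2 := by ring

/-- If the variance of the step is matched to the sign of `s`, then `negProb (s / √t)` is
superharmonic for the random walk up to a summable error. -/
lemma exists_sum_mul_negProb_le (h₁ : 0 < σ₁) (h₂ : 0 < σ₂) {ι : Type*} [Fintype ι] (j : ι → ℝ) :
    ∃ K, 0 ≤ K ∧ ∀ p, IsDist p → ∑ i, p i * j i = 0 → ∀ s,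
      ∑ i, p i * j i ^ 2 = oscScale σ₁ σ₂ s ^ 2 → ∀ t, 1 ≤ t →
      ∑ i, p i * negProb σ₁ σ₂ ((s + j i) / √t) ≤ negProb σ₁ σ₂ (s / √(t + 1)) + K / (t * √t) := by
  obtain ⟨K, hK⟩ := exists_lipschitzWith_negProbDeriv₂ σ₁ σ₂
  set b := ∑ i, |j i|
  have : 0 ≤ b := Finset.sum_nonneg fun i _ => abs_nonneg (j i)
  refine ⟨K * b ^ 3 + 15, by positivity, fun p hp hmean s hvar t ht => ?_⟩
  have ht0 : 0 < t := by linarith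
  have hr : 0 < √t := sqrt_pos.2 ht0
  set z := s / √t with hz
  have hspace := sum_mul_comp_add_le (w := fun i => j i / √t) (b := b / √t) hp
    (by simp only [← mul_div_assoc, ← Finset.sum_div, hmean, zero_div])
    (fun i => by
      rw [abs_div, abs_of_pos hr]
      gcongr
      exact Finset.single_le_sum (fun i _ => abs_nonneg (j i)) (Finset.mem_univ i))
    (hasDerivAt_negProb h₁ h₂) hasDerivAt_negProbDeriv hK z
  have hheat : negProbDeriv₂ σ₁ σ₂ z / 2 * ∑ i, p i * (j i / √t) ^ 2
      = -(z * negProbDeriv σ₁ σ₂ z / (2 * t)) := by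
    simp only [div_pow, sq_sqrt ht0.le, ← mul_div_assoc, ← Finset.sum_div, hvar]
    rw [← oscScale_div hr, ← neg_div, ← oscScale_sq_mul_negProbDeriv₂ h₁ h₂]
    ring
  have hcube : K * (b / √t) ^ 3 = K * b ^ 3 / (t * √t) := by
    rw [div_pow, pow_succ √t, sq_sqrt ht0.le, mul_div_assoc]
  have htime : 15 / t ^ 2 ≤ 15 / (t * √t) := by
    rw [sq]
    gcongr
    exact sqrt_le_self_iff.2 (.inr ht)
  calc ∑ i, p i * negProb σ₁ σ₂ ((s + j i) / √t)
      = ∑ i, p i * negProb σ₁ σ₂ (z + j i / √t) := by simp only [add_div, hz]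
    _ ≤ negProb σ₁ σ₂ z - z * negProbDeriv σ₁ σ₂ z / (2 * t) + K * b ^ 3 / (t * √t) := by
      linarith
    _ ≤ negProb σ₁ σ₂ (s / √(t + 1)) + 15 / (t * √t) + K * b ^ 3 / (t * √t) := by
      linarith [negProb_sub_le_negProb_div_sqrt h₁ h₂ ht0 s]
    _ = negProb σ₁ σ₂ (s / √(t + 1)) + (K * b ^ 3 + 15) / (t * √t) := by ring

end OscillatingBrownianMotion

section Achievability

variable {W : X → Y → ℝ} {P P₁ P₂ : X → ℝ} {σ₁ σ₂ ε : ℝ}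

lemma sum_prod_mul (W : X → Y → ℝ) (P : X → ℝ) (g : X → Y → ℝ) :
    ∑ i : X × Y, P i.1 * W i.1 i.2 * g i.1 i.2 = ∑ x, P x * ∑ y, W x y * g x y := by
  simp only [Fintype.sum_prod_type, Finset.mul_sum, mul_assoc]

lemma isDist_joint (hW : IsChannel W) (hP : IsDist P) :
    IsDist fun i : X × Y => P i.1 * W i.1 i.2 := by
  refine ⟨fun i => mul_nonneg (hP.1 _) ((hW _).1 _), ?_⟩
  simpa only [mul_one, (hW _).2, hP.2] using sum_prod_mul W P fun _ _ => 1

/-- The bound on the probability that the accumulated information density, now at `s` with `k`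
steps to go, ends at `θ` or below; the diffusion approximation `negProb` is smoothed by running
it for the extra time `T`, at the price of an error `K / (T * √T)` per step. -/
def costBound (σ₁ σ₂ K T θ η : ℝ) (k : ℕ) (s : ℝ) : ℝ :=
  negProb σ₁ σ₂ ((s - θ) / √(T + k)) + k * (K / (T * √T)) + η

lemma exists_isSupersolution_costBound (hW : IsChannel W) (hcol : NoZeroColumn W)
    (hP₁ : P₁ ∈ capacityAchievers W) (hP₂ : P₂ ∈ capacityAchievers W)
    (h₁ : 0 < σ₁) (h₂ : 0 < σ₂) (hv₁ : ∑ x, P₁ x * nu W x = σ₁ ^ 2)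
    (hv₂ : ∑ x, P₂ x * nu W x = σ₂ ^ 2) :
    ∃ K, ∀ T, 1 ≤ T → ∀ θ η,
      IsSupersolution W (qStar W) (centDens W) (costBound σ₁ σ₂ K T θ η) := by
  obtain ⟨K, hK, hstep⟩ := exists_sum_mul_negProb_le h₁ h₂ fun i : X × Y => centDens W i.1 i.2
  refine ⟨K, fun T hT θ η k s => ?_⟩
  obtain ⟨P, hP, hPv⟩ : ∃ P ∈ capacityAchievers W,
      ∑ x, P x * nu W x = oscScale σ₁ σ₂ (s - θ) ^ 2 := by
    unfold oscScale
    split_ifs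
    exacts [⟨P₁, hP₁, hv₁⟩, ⟨P₂, hP₂, hv₂⟩]
  refine ⟨P, hP.1, outDist_eq_qStar hW hP, ?_⟩
  have hp := isDist_joint hW hP.1
  have hTk : T ≤ T + k := le_add_of_nonneg_right k.cast_nonneg
  have hheat := hstep _ hp
    ((sum_prod_mul W P (centDens W)).trans (sum_sum_mul_centDens hW hP)) (s - θ)
    ((sum_prod_mul W P fun x y => centDens W x y ^ 2).trans
      ((sum_sum_mul_centDens_sq hW hcol hP).trans hPv)) (T + k) (hT.trans hTk)
  have herr : K / ((T + k) * √(T + k)) ≤ K / (T * √T) := by gcongr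
  calc ∑ x, P x * ∑ y, W x y * costBound σ₁ σ₂ K T θ η k (s + centDens W x y)
      = ∑ i : X × Y, P i.1 * W i.1 i.2
          * negProb σ₁ σ₂ ((s - θ + centDens W i.1 i.2) / √(T + k))
        + (∑ i : X × Y, P i.1 * W i.1 i.2) * (k * (K / (T * √T)) + η) := by
        rw [← sum_prod_mul, Finset.sum_mul, ← Finset.sum_add_distrib]
        refine Finset.sum_congr rfl fun i _ => ?_
        rw [costBound, add_sub_right_comm]
        ring
    _ ≤ costBound σ₁ σ₂ K T θ η (k + 1) s := by
        rw [hp.2, one_mul, costBound]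
        push_cast
        rw [← add_assoc T]
        linarith

lemma ite_le_costBound_zero (h₁ : 0 < σ₁) (h₂ : 0 < σ₂) {K T a η : ℝ} (hT : 0 < T) (hη : 0 ≤ η)
    (ha : 1 ≤ negProb σ₁ σ₂ (-a) + η) (L s : ℝ) :
    (if s ≤ L then (1 : ℝ) else 0) ≤ costBound σ₁ σ₂ K T (L + a * √T) η 0 s := by
  rw [costBound, Nat.cast_zero, zero_mul, add_zero, add_zero]
  split_ifs with hs
  · refine ha.trans (add_le_add_left ((strictAnti_negProb h₁ h₂).antitone ?_) η)
    rw [div_le_iff₀ (sqrt_pos.2 hT)]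
    linarith
  · exact add_nonneg (negProb_nonneg h₁ h₂ _) hη

lemma costBound_zero_right {δ : ℝ} (hδ : 0 < δ) {n : ℕ} (hn : n ≠ 0) (K r a η : ℝ) :
    costBound σ₁ σ₂ K (δ * n) (r * √n + a * √(δ * n)) η n 0
      = negProb σ₁ σ₂ ((-r - a * √δ) / √(1 + δ)) + η + K / (δ * √δ) / √n := by
  have : (0 : ℝ) < n := Nat.cast_pos.2 (Nat.pos_of_ne_zero hn)
  have harg : (0 - (r * √n + a * √(δ * n))) / √(δ * n + n) = (-r - a * √δ) / √(1 + δ) := by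
    rw [← add_one_mul, sqrt_mul hδ.le, sqrt_mul (by positivity), add_comm δ]
    field_simp
    ring
  have herr : n * (K / (δ * n * √(δ * n))) = K / (δ * √δ) / √n := by
    rw [sqrt_mul hδ.le]
    field_simp
  rw [costBound, harg, herr, add_right_comm]

lemma exists_negProb_slack (h₁ : 0 < σ₁) (h₂ : 0 < σ₂) {r : ℝ} (h : negProb σ₁ σ₂ (-r) < ε) :
    ∃ η a δ, 0 < η ∧ 0 < δ ∧ 1 ≤ negProb σ₁ σ₂ (-a) + η ∧
      negProb σ₁ σ₂ ((-r - a * √δ) / √(1 + δ)) + η < ε := by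
  obtain ⟨η, hη, hηε⟩ := exists_between (sub_pos.2 h)
  obtain ⟨z, hz⟩ := ((tendsto_negProb_atBot σ₁ h₂).eventually
    (eventually_ge_nhds (sub_lt_self 1 hη))).exists
  have hcont : ContinuousAt
      (fun δ => negProb σ₁ σ₂ ((-r - -z * √δ) / √(1 + δ)) + η) 0 := by
    refine ((continuous_negProb h₁ h₂).continuousAt.comp ?_).add_const η
    exact ContinuousAt.div (by fun_prop) (by fun_prop) (by simp)
  have hlt : negProb σ₁ σ₂ ((-r - -z * √0) / √(1 + 0)) + η < ε := by
    simpa [lt_sub_iff_add_lt'] using hηε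
  obtain ⟨δ, hδε, hδ⟩ := (((hcont.eventually_lt_const hlt).filter_mono nhdsWithin_le_nhds).and
    (self_mem_nhdsWithin (s := Ioi 0))).exists
  exact ⟨η, -z, δ, hη, hδ, by rw [neg_neg]; linarith, hδε⟩

lemma tendsto_const_div_sqrt_natCast (c : ℝ) :
    Tendsto (fun n : ℕ => c / √n) atTop (𝓝 0) :=
  (tendsto_sqrt_atTop.comp tendsto_natCast_atTop_atTop).const_div_atTop c

lemma exists_eventually_isSupersolution (hW : IsChannel W) (hcol : NoZeroColumn W)
    (hP₁ : P₁ ∈ capacityAchievers W) (hP₂ : P₂ ∈ capacityAchievers W)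
    (h₁ : 0 < σ₁) (h₂ : 0 < σ₂) (hv₁ : ∑ x, P₁ x * nu W x = σ₁ ^ 2)
    (hv₂ : ∑ x, P₂ x * nu W x = σ₂ ^ 2) {r : ℝ} (h : negProb σ₁ σ₂ (-r) < ε) :
    ∃ ε' < ε, ∀ᶠ n : ℕ in atTop, ∃ U, IsSupersolution W (qStar W) (centDens W) U ∧
      (∀ s, (if s ≤ r * √n then (1 : ℝ) else 0) ≤ U 0 s) ∧ U n 0 ≤ ε' := by
  obtain ⟨K, hK⟩ := exists_isSupersolution_costBound hW hcol hP₁ hP₂ h₁ h₂ hv₁ hv₂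
  obtain ⟨η, a, δ, hη, hδ, ha, hlt⟩ := exists_negProb_slack h₁ h₂ h
  obtain ⟨ε', hε', hε'ε⟩ := exists_between hlt
  have herr := (tendsto_const_div_sqrt_natCast (K / (δ * √δ))).eventually_le_const (sub_pos.2 hε')
  have hT := (tendsto_natCast_atTop_atTop.const_mul_atTop hδ).eventually_ge_atTop 1
  refine ⟨ε', hε'ε, ?_⟩
  filter_upwards [herr, hT, eventually_ne_atTop 0] with n hn_err hn_T hn
  refine ⟨costBound σ₁ σ₂ K (δ * n) (r * √n + a * √(δ * n)) η, hK _ hn_T _ _,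
    ite_le_costBound_zero h₁ h₂ (by linarith) hη.le ha _, ?_⟩
  rw [costBound_zero_right hδ hn]
  linarith

lemma exists_eventually_Mfb_le (hW : IsChannel W) (hcol : NoZeroColumn W)
    (hP : P ∈ capacityAchievers W) (hε0 : 0 ≤ ε) (hε1 : ε < 1) :
    ∃ a, ∀ᶠ n : ℕ in atTop, Mfb W n ε ≤ exp (n * capacity W + a * √n) := by
  have : Nonempty X := ⟨(hP.1.exists_le_sum_mul 0).choose⟩
  obtain ⟨a, ha⟩ := exists_forall_mem_achievableSizes_le hW hcol hP hε1
  refine ⟨a, ?_⟩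
  filter_upwards [ha, eventually_ne_atTop 0] with n hle hn
  exact csSup_le ⟨1, one_mem_achievableSizes hW hε0 hn⟩ hle

lemma exists_eventually_mul_exp_le_Mfb (hW : IsChannel W) (hcol : NoZeroColumn W)
    (hP₁ : P₁ ∈ capacityAchievers W) (hP₂ : P₂ ∈ capacityAchievers W)
    (h₁ : 0 < σ₁) (h₂ : 0 < σ₂) (hv₁ : ∑ x, P₁ x * nu W x = σ₁ ^ 2)
    (hv₂ : ∑ x, P₂ x * nu W x = σ₂ ^ 2) (hε0 : 0 ≤ ε) (hε1 : ε < 1) {r : ℝ}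
    (h : negProb σ₁ σ₂ (-r) < ε) :
    ∃ c, 0 < c ∧ ∀ᶠ n : ℕ in atTop, c * exp (n * capacity W + r * √n) ≤ Mfb W n ε := by
  obtain ⟨ε', hε', hU⟩ := exists_eventually_isSupersolution hW hcol hP₁ hP₂ h₁ h₂ hv₁ hv₂ h
  obtain ⟨a, ha⟩ := exists_forall_mem_achievableSizes_le hW hcol hP₁ hε1
  refine ⟨(ε - ε') / 2, half_pos (sub_pos.2 hε'), ?_⟩
  filter_upwards [hU, ha, eventually_ne_atTop 0] with n ⟨U, hU, hU0, hUn⟩ hbdd hn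
  refine le_trans ?_
    (exp_mul_sub_le_Mfb hW (qStar_pos hW hcol hP₁) hn hε0 ⟨_, hbdd⟩ hU hU0)
  rw [mul_comm, ← mul_div_assoc]
  gcongr


lemma le_liminf_SOfb_of_mul_exp_le {r a c : ℝ} (hc : 0 < c)
    (hlower : ∀ᶠ n : ℕ in atTop, c * exp (n * capacity W + r * √n) ≤ Mfb W n ε)
    (hupper : ∀ᶠ n : ℕ in atTop, Mfb W n ε ≤ exp (n * capacity W + a * √n)) :
    r ≤ liminf (SOfb W ε) atTop := by
  have hlim : Tendsto (fun n : ℕ => r + log c / √n) atTop (𝓝 r) := by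
    simpa only [add_zero] using (tendsto_const_div_sqrt_natCast (log c)).const_add r
  have hge : ∀ᶠ n : ℕ in atTop, r + log c / √n ≤ SOfb W ε n := by
    filter_upwards [hlower, eventually_gt_atTop 0] with n hM hn
    have hs : 0 < √(n : ℝ) := sqrt_pos.2 (Nat.cast_pos.2 hn)
    have hlog := log_le_log (by positivity) hM
    rw [log_mul hc.ne' (exp_pos _).ne', log_exp] at hlog
    rw [SOfb, le_div_iff₀ hs, add_mul, div_mul_cancel₀ _ hs.ne']
    linarith
  have hle : ∀ᶠ n : ℕ in atTop, SOfb W ε n ≤ a := by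
    filter_upwards [hlower, hupper, eventually_gt_atTop 0] with n hM hM' hn
    have hlog := log_le_log (lt_of_lt_of_le (by positivity) hM) hM'
    rw [log_exp] at hlog
    rw [SOfb, div_le_iff₀ (sqrt_pos.2 (Nat.cast_pos.2 hn))]
    linarith
  rw [← hlim.liminf_eq]
  exact liminf_le_liminf hge hlim.isBoundedUnder_ge
    (IsBoundedUnder.isCoboundedUnder_ge ⟨a, eventually_map.2 hle⟩)

theorem le_liminf_SOfb (hW : IsChannel W) (hcol : NoZeroColumn W)
    (hP₁ : P₁ ∈ capacityAchievers W) (hP₂ : P₂ ∈ capacityAchievers W)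
    (h₁ : 0 < σ₁) (h₂ : 0 < σ₂) (hv₁ : ∑ x, P₁ x * nu W x = σ₁ ^ 2)
    (hv₂ : ∑ x, P₂ x * nu W x = σ₂ ^ 2) (hε1 : ε < 1) {r : ℝ}
    (hr : negProb σ₁ σ₂ (-r) = ε) :
    r ≤ liminf (SOfb W ε) atTop := by
  have hε0 : 0 ≤ ε := hr ▸ negProb_nonneg h₁ h₂ (-r)
  obtain ⟨a, ha⟩ := exists_eventually_Mfb_le hW hcol hP₁ hε0 hε1
  refine le_of_forall_lt_imp_le_of_dense fun r' hr' => ?_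
  obtain ⟨c, hc, hM⟩ := exists_eventually_mul_exp_le_Mfb hW hcol hP₁ hP₂ h₁ h₂ hv₁ hv₂ hε0 hε1
    (hr ▸ strictAnti_negProb h₁ h₂ (neg_lt_neg hr'))
  exact le_liminf_SOfb_of_mul_exp_le hc hM ha

end Achievability

/-- Theorem 2 (Refined achievability for compound-dispersion channels). -/
theorem refined_achievability
    {X Y : Type*} [Fintype X] [Fintype Y]
    (W : X → Y → ℝ) (hW : IsChannel W) (hcol : NoZeroColumn W)
    (hVmin : 0 < Vmin W)
    (β : ℝ) (hβ : β = Real.sqrt (Vmin W / Vmax W)) :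
    ∀ ε : ℝ, 0 < ε → ε < 1 →
      (ε ≤ β / (1 + β) →
        Filter.liminf (fun n : ℕ =>
            (Real.log (Mfb W n ε) - n * capacity W) / Real.sqrt n) Filter.atTop ≥
          Real.sqrt (Vmin W) * gcdfInv (1 / (2 * β) * (ε * (1 + β)))) ∧
      (β / (1 + β) < ε →
        Filter.liminf (fun n : ℕ =>
            (Real.log (Mfb W n ε) - n * capacity W) / Real.sqrt n) Filter.atTop ≥
          Real.sqrt (Vmax W) * gcdfInv (1 / 2 * (ε * (1 + β) + (1 - β)))) := by
  intro ε hε hε1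
  have hne := capacityAchievers_nonempty_of_Vmin_ne_zero hVmin.ne'
  have hVmax : 0 < Vmax W := hVmin.trans_le (Vmin_le_Vmax hW hne)
  obtain ⟨P₁, hP₁, hv₁⟩ := exists_sum_mul_nu_eq_Vmin hW hne
  obtain ⟨P₂, hP₂, hv₂⟩ := exists_sum_mul_nu_eq_Vmax hW hne
  have h₁ := sqrt_pos.2 hVmin
  have h₂ := sqrt_pos.2 hVmax
  rw [← sq_sqrt hVmin.le] at hv₁
  rw [← sq_sqrt hVmax.le] at hv₂
  rw [sqrt_div hVmin.le] at hβ
  have key := fun r => le_liminf_SOfb (r := r) hW hcol hP₁ hP₂ h₁ h₂ hv₁ hv₂ hε1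
  exact ⟨fun h => key _ (negProb_quantile_of_le h₁ h₂ hβ hε h),
    fun h => key _ (negProb_quantile_of_lt h₁ h₂ hβ hε1 h)⟩

end Paper
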